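/- arXiv:2601.03572 — 5 statements merged into one kernel-verified Lean document; each statement's English description precedes it below -/
import Mathlib

section
/- Let Ω be a (3,10,40)-graph. Then the diameter of Ω is either 2 or 3; that is, 2 ≤ diam(Ω) ≤ 3. -/
namespace R310
open Finset
set_option linter.unusedSectionVars false

variable {V : Type*} [Fintype V] [DecidableEq V] (G : SimpleGraph V) [DecidableRel G.Adj]

/-- neighbours of `v` inside `S` -/
def nb (S : Finset V) (v : V) : Finset V := S.filter (fun w => G.Adj v w)
def dg (S : Finset V) (v : V) : ℕ := (nb G S v).card
def DD (S : Finset V) : ℕ := ∑ v ∈ S, dg G S v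
def rest (S : Finset V) (v : V) : Finset V := S.filter (fun w => w ≠ v ∧ ¬ G.Adj v w)
def Z (S : Finset V) (v : V) : ℕ := ∑ w ∈ nb G S v, dg G S w
def Indep (I : Finset V) : Prop := ∀ a ∈ I, ∀ b ∈ I, ¬ G.Adj a b
def ind (k : ℕ) (S : Finset V) : Prop := ∀ I ⊆ S, Indep G I → I.card ≤ k
def TF : Prop := ∀ a b c, G.Adj a b → G.Adj a c → ¬ G.Adj b c
/-- edge lower bound -/
def LB (k n m : ℕ) : Prop := ∀ S : Finset V, S.card = n → ind G k S → 2 * m ≤ DD G S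
def NB (k n : ℕ) : Prop := ∀ S : Finset V, n ≤ S.card → ¬ ind G k S

variable {G}

lemma mem_nb {S : Finset V} {v w : V} : w ∈ nb G S v ↔ w ∈ S ∧ G.Adj v w := by simp [nb]
lemma mem_rest {S : Finset V} {v w : V} : w ∈ rest G S v ↔ w ∈ S ∧ w ≠ v ∧ ¬ G.Adj v w := by
  simp [rest]

lemma indep_nb (h : TF G) (S : Finset V) (v : V) : Indep G (nb G S v) := by
  intro a ha b hb
  exact h v a b (mem_nb.1 ha).2 (mem_nb.1 hb).2

lemma dg_le (h : TF G) {k : ℕ} {S : Finset V} (hS : ind G k S) (v : V) : dg G S v ≤ k :=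
  hS _ (filter_subset _ _) (indep_nb h S v)

lemma ind_mono {k : ℕ} {S T : Finset V} (hST : S ⊆ T) (h : ind G k T) : ind G k S :=
  fun I hI hi => h I (hI.trans hST) hi

lemma indep_insert {I : Finset V} {v : V} (hI : Indep G I) (hv : ∀ w ∈ I, ¬ G.Adj v w) :
    Indep G (insert v I) := by
  intro a ha b hb
  rcases mem_insert.1 ha with ha1 | ha1 <;> rcases mem_insert.1 hb with hb1 | hb1
  · subst ha1; subst hb1; exact G.loopless.irrefl _
  · subst ha1; exact hv b hb1
  · subst hb1; exact fun h => hv a ha1 h.symm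
  · exact hI a ha1 b hb1

lemma indep_union {I J : Finset V} (hI : Indep G I) (hJ : Indep G J)
    (h : ∀ a ∈ I, ∀ b ∈ J, ¬ G.Adj a b) : Indep G (I ∪ J) := by
  intro a ha b hb
  rcases mem_union.1 ha with ha | ha <;> rcases mem_union.1 hb with hb | hb
  · exact hI a ha b hb
  · exact h a ha b hb
  · exact fun e => h b hb a ha e.symm
  · exact hJ a ha b hb

lemma ind_rest {k : ℕ} {S : Finset V} (hS : ind G (k+1) S) {v : V} (hv : v ∈ S) :
    ind G k (rest G S v) := by
  intro I hI hi
  have hvI : v ∉ I := fun h => (mem_rest.1 (hI h)).2.1 rfl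
  have := hS (insert v I) ?_ (indep_insert hi fun w hw => (mem_rest.1 (hI hw)).2.2)
  · rw [card_insert_of_notMem hvI] at this; omega
  · intro w hw
    rcases mem_insert.1 hw with rfl | hw
    · exact hv
    · exact (mem_rest.1 (hI hw)).1

lemma card_rest {S : Finset V} {v : V} (hv : v ∈ S) :
    (rest G S v).card + dg G S v + 1 = S.card := by
  have : S = insert v (rest G S v ∪ nb G S v) := by
    ext w; simp only [mem_insert, mem_union, mem_rest, mem_nb]
    constructor
    · intro h; tauto
    · rintro (rfl | h | h) <;> tauto
  conv_rhs => rw [this]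
  rw [card_insert_of_notMem, card_union_of_disjoint, dg]
  · rw [disjoint_left]; intro a ha hb; exact (mem_rest.1 ha).2.2 (mem_nb.1 hb).2
  · simp only [mem_union, mem_rest, mem_nb]; simp

lemma dg_union {S T : Finset V} (h : Disjoint S T) (v : V) :
    dg G (S ∪ T) v = dg G S v + dg G T v := by
  unfold dg nb
  rw [filter_union, card_union_of_disjoint (disjoint_filter_filter h)]

lemma dg_swap (S T : Finset V) : ∑ a ∈ S, dg G T a = ∑ b ∈ T, dg G S b := by
  unfold dg nb
  simp only [card_filter]
  rw [sum_comm]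
  simp only [G.adj_comm]

lemma DD_union {S T : Finset V} (h : Disjoint S T) :
    DD G (S ∪ T) = DD G S + DD G T + 2 * ∑ a ∈ S, dg G T a := by
  unfold DD
  rw [sum_union h]
  simp only [dg_union h, sum_add_distrib]
  rw [dg_swap T S]; ring

lemma dg_zero {S : Finset V} {v : V} (h : ∀ w ∈ S, ¬ G.Adj v w) : dg G S v = 0 := by
  unfold dg nb; rw [card_eq_zero, filter_eq_empty_iff]; exact fun w hw => h w hw

lemma dg_all {S : Finset V} {v : V} (h : ∀ w ∈ S, G.Adj v w) : dg G S v = S.card := by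
  unfold dg nb; rw [filter_true_of_mem h]

lemma DD_indep {S : Finset V} (h : Indep G S) : DD G S = 0 := by
  unfold DD; exact sum_eq_zero fun a ha => dg_zero (h a ha)

lemma DD_even (S : Finset V) : ∃ e, DD G S = 2 * e := by
  induction S using Finset.induction_on with
  | empty => exact ⟨0, by simp [DD]⟩
  | insert v S hv ih =>
    obtain ⟨e, he⟩ := ih
    rw [insert_eq, DD_union (by simpa using hv), he, DD_indep (S := {v})]
    · exact ⟨e + ∑ a ∈ {v}, dg G S a, by ring⟩
    · intro a ha b hb; simp at ha hb; subst ha; subst hb; exact G.loopless.irrefl _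

lemma split_rest {S : Finset V} {v : V} (hv : v ∈ S) :
    S = (rest G S v) ∪ (insert v (nb G S v)) := by
  ext w; simp only [mem_insert, mem_union, mem_rest, mem_nb]
  constructor
  · intro h; tauto
  · rintro (h | rfl | h) <;> tauto

lemma disj_rest {S : Finset V} {v : V}  :
    Disjoint (rest G S v) (insert v (nb G S v)) := by
  rw [disjoint_left]; intro a ha hb
  simp only [mem_insert, mem_rest, mem_nb] at ha hb; tauto

/-- degree of a vertex of the rest -/
lemma dg_rest {S : Finset V} {v w : V} (hv : v ∈ S) (hw : w ∈ rest G S v) :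
    dg G S w = dg G (rest G S v) w + dg G (nb G S v) w := by
  conv_lhs => rw [split_rest (G := G) hv]
  rw [dg_union disj_rest, insert_eq, dg_union (by simp [nb]), dg_zero (S := {v})]
  · ring
  · intro x hx; simp at hx; subst hx; exact fun h => (mem_rest.1 hw).2.2 h.symm

lemma dg_nb (h : TF G) {S : Finset V} {v w : V} (hv : v ∈ S) (hw : w ∈ nb G S v) :
    dg G S w = dg G (rest G S v) w + 1 := by
  conv_lhs => rw [split_rest (G := G) hv]
  rw [dg_union disj_rest, insert_eq, dg_union (by simp [nb]), dg_zero (S := nb G S v),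
    dg_all (S := {v})]
  · simp
  · intro x hx; simp at hx; subst hx; exact (mem_nb.1 hw).2.symm
  · exact indep_nb h S v w hw

lemma DD_rest (h : TF G) {S : Finset V} {v : V} (hv : v ∈ S) :
    DD G S = DD G (rest G S v) + 2 * Z G S v := by
  have h1 : DD G S = ∑ w ∈ rest G S v, dg G S w + (dg G S v + Z G S v) := by
    conv_lhs => unfold DD
    have := sum_union (f := fun w => dg G S w) (disj_rest (G := G) (S := S) (v := v))
    rw [← split_rest hv] at this
    rw [this, sum_insert (by simp [nb])]; rfl
  have h2 : ∑ w ∈ rest G S v, dg G S w = DD G (rest G S v) + ∑ w ∈ nb G S v, dg G (rest G S v) w := by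
    rw [sum_congr rfl (fun w hw => dg_rest hv hw), sum_add_distrib, dg_swap (rest G S v) (nb G S v)]; rfl
  have h3 : Z G S v = ∑ w ∈ nb G S v, dg G (rest G S v) w + dg G S v := by
    unfold Z; rw [sum_congr rfl (fun w hw => dg_nb h hv hw), sum_add_distrib]; simp [dg]
  omega

lemma sum_Z (S : Finset V) : ∑ v ∈ S, Z G S v = ∑ v ∈ S, dg G S v ^ 2 := by
  unfold Z nb
  simp only [sum_filter]
  rw [sum_comm]
  apply sum_congr rfl; intro v _
  rw [← sum_filter, sum_const, sq]
  simp only [smul_eq_mul]; congr 1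
  unfold dg nb; simp only [G.adj_comm]

lemma NB.mono {k n m : ℕ} (h : NB G k n) (hm : n ≤ m) : NB G k m :=
  fun S hS => h S (hm.trans hS)

lemma NB_of {k n : ℕ} (h : ∀ S : Finset V, S.card = n → ¬ ind G k S) : NB G k n := by
  intro S hS hi
  obtain ⟨T, hT, hc⟩ := exists_subset_card_eq hS
  exact h T hc (ind_mono hT hi)

lemma count (h : TF G) {k n : ℕ} (α β : ℤ) (hk : ∀ d ≤ k + 1, d + 1 ≤ n →
    NB G k (n - 1 - d) ∨ ∃ m, LB G k (n - 1 - d) m ∧ α + β * d ≤ m + d ^ 2)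
    {S : Finset V} (hS : S.card = n) (hi : ind G (k+1) S) :
    ∃ e : ℕ, DD G S = 2 * e ∧ n * α + 2 * β * e ≤ n * e ∧ 2 * e ≤ (k + 1) * n := by
  obtain ⟨e, he⟩ := DD_even (G := G) S
  refine ⟨e, he, ?_, ?_⟩
  · have key : ∀ v ∈ S, α + β * dg G S v + Z G S v ≤ e + (dg G S v : ℤ) ^ 2 := by
      intro v hv
      have hc := card_rest (G := G) hv
      have hr := ind_rest hi hv
      have hd := DD_rest h hv
      rcases hk (dg G S v) (dg_le h hi v) (by omega) with h1 | ⟨m, h1, h2⟩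
      · exact absurd hr (h1 _ (by omega))
      · have := h1 _ (by omega) hr
        have : m + Z G S v ≤ e := by omega
        zify at this
        linarith
    have := sum_le_sum key
    simp only [sum_add_distrib, sum_const, ← mul_sum, nsmul_eq_mul, hS] at this
    have hz := sum_Z (G := G) S
    have hD : ∑ v ∈ S, dg G S v = 2 * e := he
    zify at hz hD
    rw [hz, hD] at this
    linarith
  · have : DD G S ≤ ∑ v ∈ S, (k+1) := sum_le_sum fun v _ => dg_le h hi v
    rw [sum_const, hS, he, smul_eq_mul] at this; linarith

lemma step (h : TF G) {k n : ℕ} (m : ℕ) (α β : ℤ) (hk : ∀ d ≤ k + 1, d + 1 ≤ n →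
    NB G k (n - 1 - d) ∨ ∃ m, LB G k (n - 1 - d) m ∧ α + β * d ≤ m + d ^ 2)
    (ar : ∀ e : ℕ, n * α + 2 * β * e ≤ n * e → 2 * e ≤ (k + 1) * n → m ≤ e) : LB G (k+1) n m := by
  intro S hS hi
  obtain ⟨e, he, h1, h2⟩ := count h α β hk hS hi
  have := ar e h1 h2
  omega

lemma stepN (h : TF G) {k n : ℕ} (α β : ℤ) (hk : ∀ d ≤ k + 1, d + 1 ≤ n →
    NB G k (n - 1 - d) ∨ ∃ m, LB G k (n - 1 - d) m ∧ α + β * d ≤ m + d ^ 2)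
    (ar : ∀ e : ℕ, n * α + 2 * β * e ≤ n * e → 2 * e ≤ (k + 1) * n → False) : NB G (k+1) n := by
  apply NB_of
  intro S hS hi
  obtain ⟨e, he, h1, h2⟩ := count h α β hk hS hi
  exact ar e h1 h2

lemma LB0 (k n : ℕ) : LB G k n 0 := fun S _ _ => by omega

lemma N0_1 : NB G 0 1 := by
  intro S hS hi
  obtain ⟨v, hv⟩ := card_pos.1 (show 0 < S.card by omega)
  have := hi {v} (by simpa using hv) (by
    intro a ha b hb; simp at ha hb; subst ha; subst hb; exact G.loopless.irrefl _)
  simp at this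

lemma N1_3 (h : TF G) : NB G 1 3 := by
  refine stepN h 100 0 (fun d hd hn => ?_) (by intro e; push_cast; omega)
  exact Or.inl (N0_1.mono (by omega))
lemma L1_2 (h : TF G) : LB G 1 2 1 := by
  refine step h 1 1 0 (fun d hd hn => ?_) (by intro e; push_cast; omega)
  interval_cases d
  · exact Or.inl (N0_1.mono (by omega))
  · exact Or.inr ⟨0, LB0 _ _, by norm_num⟩
lemma N2_6 (h : TF G) : NB G 2 6 := by
  refine stepN h 100 0 (fun d hd hn => ?_) (by intro e; push_cast; omega)
  exact Or.inl ((N1_3 h).mono (by omega))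
lemma L2_5 (h : TF G) : LB G 2 5 5 := by
  refine step h 5 5 0 (fun d hd hn => ?_) (by intro e; push_cast; omega)
  interval_cases d
  · exact Or.inl ((N1_3 h).mono (by omega))
  · exact Or.inl ((N1_3 h).mono (by omega))
  · exact Or.inr ⟨1, L1_2 h, by norm_num⟩
lemma L2_4 (h : TF G) : LB G 2 4 2 := by
  refine step h 2 2 0 (fun d hd hn => ?_) (by intro e; push_cast; omega)
  interval_cases d
  · exact Or.inl ((N1_3 h).mono (by omega))
  · exact Or.inr ⟨1, L1_2 h, by norm_num⟩
  · exact Or.inr ⟨0, LB0 _ _, by norm_num⟩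
lemma L2_3 (h : TF G) : LB G 2 3 1 := by
  refine step h 1 1 0 (fun d hd hn => ?_) (by intro e; push_cast; omega)
  interval_cases d
  · exact Or.inr ⟨1, L1_2 h, by norm_num⟩
  · exact Or.inr ⟨0, LB0 _ _, by norm_num⟩
  · exact Or.inr ⟨0, LB0 _ _, by norm_num⟩
lemma N3_9 (h : TF G) : NB G 3 9 := by
  refine stepN h 14 0 (fun d hd hn => ?_) (by intro e; push_cast; omega)
  interval_cases d
  · exact Or.inl ((N2_6 h).mono (by omega))
  · exact Or.inl ((N2_6 h).mono (by omega))
  · exact Or.inl ((N2_6 h).mono (by omega))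
  · exact Or.inr ⟨5, L2_5 h, by norm_num⟩
lemma L3_8 (h : TF G) : LB G 3 8 10 := by
  refine step h 10 5 2 (fun d hd hn => ?_) (by intro e; push_cast; omega)
  interval_cases d
  · exact Or.inl ((N2_6 h).mono (by omega))
  · exact Or.inl ((N2_6 h).mono (by omega))
  · exact Or.inr ⟨5, L2_5 h, by norm_num⟩
  · exact Or.inr ⟨2, L2_4 h, by norm_num⟩
lemma L3_7 (h : TF G) : LB G 3 7 6 := by
  refine step h 6 6 0 (fun d hd hn => ?_) (by intro e; push_cast; omega)
  interval_cases d
  · exact Or.inl ((N2_6 h).mono (by omega))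
  · exact Or.inr ⟨5, L2_5 h, by norm_num⟩
  · exact Or.inr ⟨2, L2_4 h, by norm_num⟩
  · exact Or.inr ⟨1, L2_3 h, by norm_num⟩
lemma L3_6 (h : TF G) : LB G 3 6 3 := by
  refine step h 3 1 2 (fun d hd hn => ?_) (by intro e; push_cast; omega)
  interval_cases d
  · exact Or.inr ⟨5, L2_5 h, by norm_num⟩
  · exact Or.inr ⟨2, L2_4 h, by norm_num⟩
  · exact Or.inr ⟨1, L2_3 h, by norm_num⟩
  · exact Or.inr ⟨0, LB0 _ _, by norm_num⟩
lemma N4_14 (h : TF G) : NB G 4 14 := by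
  refine stepN h 100 0 (fun d hd hn => ?_) (by intro e; push_cast; omega)
  exact Or.inl ((N3_9 h).mono (by omega))
lemma L4_13 (h : TF G) : LB G 4 13 26 := by
  refine step h 26 26 0 (fun d hd hn => ?_) (by intro e; push_cast; omega)
  interval_cases d
  · exact Or.inl ((N3_9 h).mono (by omega))
  · exact Or.inl ((N3_9 h).mono (by omega))
  · exact Or.inl ((N3_9 h).mono (by omega))
  · exact Or.inl ((N3_9 h).mono (by omega))
  · exact Or.inr ⟨10, L3_8 h, by norm_num⟩
lemma L4_12 (h : TF G) : LB G 4 12 20 := by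
  refine step h 20 10 3 (fun d hd hn => ?_) (by intro e; push_cast; omega)
  interval_cases d
  · exact Or.inl ((N3_9 h).mono (by omega))
  · exact Or.inl ((N3_9 h).mono (by omega))
  · exact Or.inl ((N3_9 h).mono (by omega))
  · exact Or.inr ⟨10, L3_8 h, by norm_num⟩
  · exact Or.inr ⟨6, L3_7 h, by norm_num⟩
lemma L4_11 (h : TF G) : LB G 4 11 15 := by
  refine step h 15 12 1 (fun d hd hn => ?_) (by intro e; push_cast; omega)
  interval_cases d
  · exact Or.inl ((N3_9 h).mono (by omega))
  · exact Or.inl ((N3_9 h).mono (by omega))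
  · exact Or.inr ⟨10, L3_8 h, by norm_num⟩
  · exact Or.inr ⟨6, L3_7 h, by norm_num⟩
  · exact Or.inr ⟨3, L3_6 h, by norm_num⟩
lemma L4_10 (h : TF G) : LB G 4 10 10 := by
  refine step h 10 10 0 (fun d hd hn => ?_) (by intro e; push_cast; omega)
  interval_cases d
  · exact Or.inl ((N3_9 h).mono (by omega))
  · exact Or.inr ⟨10, L3_8 h, by norm_num⟩
  · exact Or.inr ⟨6, L3_7 h, by norm_num⟩
  · exact Or.inr ⟨3, L3_6 h, by norm_num⟩
  · exact Or.inr ⟨0, LB0 _ _, by norm_num⟩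
lemma L4_9 (h : TF G) : LB G 4 9 7 := by
  refine step h 7 7 0 (fun d hd hn => ?_) (by intro e; push_cast; omega)
  interval_cases d
  · exact Or.inr ⟨10, L3_8 h, by norm_num⟩
  · exact Or.inr ⟨6, L3_7 h, by norm_num⟩
  · exact Or.inr ⟨3, L3_6 h, by norm_num⟩
  · exact Or.inr ⟨0, LB0 _ _, by norm_num⟩
  · exact Or.inr ⟨0, LB0 _ _, by norm_num⟩
lemma N5_19 (h : TF G) : NB G 5 19 := by
  refine stepN h 51 0 (fun d hd hn => ?_) (by intro e; push_cast; omega)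
  interval_cases d
  · exact Or.inl ((N4_14 h).mono (by omega))
  · exact Or.inl ((N4_14 h).mono (by omega))
  · exact Or.inl ((N4_14 h).mono (by omega))
  · exact Or.inl ((N4_14 h).mono (by omega))
  · exact Or.inl ((N4_14 h).mono (by omega))
  · exact Or.inr ⟨26, L4_13 h, by norm_num⟩
lemma L5_18 (h : TF G) : LB G 5 18 45 := by
  refine step h 45 30 3 (fun d hd hn => ?_) (by intro e; push_cast; omega)
  interval_cases d
  · exact Or.inl ((N4_14 h).mono (by omega))
  · exact Or.inl ((N4_14 h).mono (by omega))
  · exact Or.inl ((N4_14 h).mono (by omega))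
  · exact Or.inl ((N4_14 h).mono (by omega))
  · exact Or.inr ⟨26, L4_13 h, by norm_num⟩
  · exact Or.inr ⟨20, L4_12 h, by norm_num⟩
lemma L5_17 (h : TF G) : LB G 5 17 38 := by
  refine step h 38 20 4 (fun d hd hn => ?_) (by intro e; push_cast; omega)
  interval_cases d
  · exact Or.inl ((N4_14 h).mono (by omega))
  · exact Or.inl ((N4_14 h).mono (by omega))
  · exact Or.inl ((N4_14 h).mono (by omega))
  · exact Or.inr ⟨26, L4_13 h, by norm_num⟩
  · exact Or.inr ⟨20, L4_12 h, by norm_num⟩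
  · exact Or.inr ⟨15, L4_11 h, by norm_num⟩
lemma L5_16w (h : TF G) : LB G 5 16 31 := by
  refine step h 31 23 2 (fun d hd hn => ?_) (by intro e; push_cast; omega)
  interval_cases d
  · exact Or.inl ((N4_14 h).mono (by omega))
  · exact Or.inl ((N4_14 h).mono (by omega))
  · exact Or.inr ⟨26, L4_13 h, by norm_num⟩
  · exact Or.inr ⟨20, L4_12 h, by norm_num⟩
  · exact Or.inr ⟨15, L4_11 h, by norm_num⟩
  · exact Or.inr ⟨10, L4_10 h, by norm_num⟩
lemma L5_15 (h : TF G) : LB G 5 15 25 := by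
  refine step h 25 18 2 (fun d hd hn => ?_) (by intro e; push_cast; omega)
  interval_cases d
  · exact Or.inl ((N4_14 h).mono (by omega))
  · exact Or.inr ⟨26, L4_13 h, by norm_num⟩
  · exact Or.inr ⟨20, L4_12 h, by norm_num⟩
  · exact Or.inr ⟨15, L4_11 h, by norm_num⟩
  · exact Or.inr ⟨10, L4_10 h, by norm_num⟩
  · exact Or.inr ⟨7, L4_9 h, by norm_num⟩
lemma L5_14 (h : TF G) : LB G 5 14 19 := by
  refine step h 19 19 0 (fun d hd hn => ?_) (by intro e; push_cast; omega)
  interval_cases d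
  · exact Or.inr ⟨26, L4_13 h, by norm_num⟩
  · exact Or.inr ⟨20, L4_12 h, by norm_num⟩
  · exact Or.inr ⟨15, L4_11 h, by norm_num⟩
  · exact Or.inr ⟨10, L4_10 h, by norm_num⟩
  · exact Or.inr ⟨7, L4_9 h, by norm_num⟩
  · exact Or.inr ⟨0, LB0 _ _, by norm_num⟩
lemma L5_13 (h : TF G) : LB G 5 13 14 := by
  refine step h 14 14 0 (fun d hd hn => ?_) (by intro e; push_cast; omega)
  interval_cases d
  · exact Or.inr ⟨20, L4_12 h, by norm_num⟩
  · exact Or.inr ⟨15, L4_11 h, by norm_num⟩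
  · exact Or.inr ⟨10, L4_10 h, by norm_num⟩
  · exact Or.inr ⟨7, L4_9 h, by norm_num⟩
  · exact Or.inr ⟨0, LB0 _ _, by norm_num⟩
  · exact Or.inr ⟨0, LB0 _ _, by norm_num⟩

lemma dg_eq_zero {S : Finset V} {v w : V} (h : dg G S v = 0) (hw : w ∈ S) : ¬ G.Adj v w := by
  intro ha
  have : w ∈ nb G S v := mem_nb.2 ⟨hw, ha⟩
  rw [dg, card_eq_zero] at h
  rw [h] at this; simp at this

lemma dg_le_one {S : Finset V} {v w x : V} (h : dg G S v ≤ 1) (hw : w ∈ S) (hx : x ∈ S)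
    (aw : G.Adj v w) (ax : G.Adj v x) : w = x :=
  card_le_one.1 h w (mem_nb.2 ⟨hw, aw⟩) x (mem_nb.2 ⟨hx, ax⟩)

lemma dg_pos {S : Finset V} {v : V} (h : 1 ≤ dg G S v) : ∃ w ∈ S, G.Adj v w := by
  obtain ⟨w, hw⟩ := card_pos.1 (show 0 < (nb G S v).card from h)
  exact ⟨w, (mem_nb.1 hw).1, (mem_nb.1 hw).2⟩

lemma dg_mono {S T : Finset V} (h : S ⊆ T) (v : V) : dg G S v ≤ dg G T v :=
  card_le_card (filter_subset_filter _ h)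

lemma one_le_dg {S : Finset V} {v w : V} (hw : w ∈ S) (aw : G.Adj v w) : 1 ≤ dg G S v :=
  card_pos.2 ⟨w, mem_nb.2 ⟨hw, aw⟩⟩

lemma two_le_dg {S : Finset V} {v w x : V} (hw : w ∈ S) (hx : x ∈ S) (hne : w ≠ x)
    (aw : G.Adj v w) (ax : G.Adj v x) : 2 ≤ dg G S v := by
  by_contra hc
  exact hne (dg_le_one (by omega) hw hx aw ax)

lemma three_le_dg {S : Finset V} {v w x y : V} (hw : w ∈ S) (hx : x ∈ S) (hy : y ∈ S)
    (h1 : w ≠ x) (h2 : w ≠ y) (h3 : x ≠ y)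
    (aw : G.Adj v w) (ax : G.Adj v x) (ay : G.Adj v y) : 3 ≤ dg G S v := by
  have : ({w, x, y} : Finset V) ⊆ nb G S v := by
    intro z hz; simp only [mem_insert, mem_singleton] at hz
    rcases hz with rfl | rfl | rfl <;> simp [mem_nb, *]
  have := card_le_card this
  rwa [card_eq_three.2 ⟨w, x, y, h1, h2, h3, rfl⟩] at this

lemma dg_filter (S : Finset V) (P : V → Prop) [DecidablePred P] (v : V) :
    dg G (S.filter P) v = ∑ w ∈ nb G S v, if P w then 1 else 0 := by
  rw [← card_filter]; unfold dg nb; congr 1; ext x; simp only [mem_filter]; tauto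

lemma sum_deg {S : Finset V} (f : V → ℕ) (hf : ∀ v ∈ S, 2 ≤ f v ∧ f v ≤ 5) (F : ℕ → ℤ) :
    ∑ v ∈ S, F (f v) = F 2 * (S.filter (fun v => f v = 2)).card +
      F 3 * (S.filter (fun v => f v = 3)).card + F 4 * (S.filter (fun v => f v = 4)).card +
      F 5 * (S.filter (fun v => f v = 5)).card := by
  simp only [card_filter, Nat.cast_sum, mul_sum, ← sum_add_distrib]
  apply sum_congr rfl
  intro v hv
  obtain ⟨h1, h2⟩ := hf v hv
  generalize f v = n at *
  interval_cases n <;> simp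

/-- the bound on `Z` -/
def gb (d : ℕ) : ℤ := if d = 2 then 5 else if d = 3 then 11 else if d = 4 then 16 else 21

lemma e16_Z (h : TF G) {S : Finset V} (hS : S.card = 16) (hi : ind G 5 S) (hD : DD G S = 62)
    {v : V} (hv : v ∈ S) : 2 ≤ dg G S v ∧ dg G S v ≤ 5 ∧ (Z G S v : ℤ) ≤ gb (dg G S v) := by
  have hc := card_rest (G := G) hv
  have hr := ind_rest hi hv
  have hd := DD_rest h hv
  have h5 := dg_le h hi v
  have h2 : 2 ≤ dg G S v := by
    by_contra hlt
    exact N4_14 h _ (by omega) hr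
  refine ⟨h2, h5, ?_⟩
  have h6 : dg G S v = 2 ∨ dg G S v = 3 ∨ dg G S v = 4 ∨ dg G S v = 5 := by omega
  rcases h6 with e | e | e | e
  · have := L4_13 h _ (by omega) hr
    simp only [gb, e]; norm_num; omega
  · have := L4_12 h _ (by omega) hr
    simp only [gb, e]; norm_num; omega
  · have := L4_11 h _ (by omega) hr
    simp only [gb, e]; norm_num; omega
  · have := L4_10 h _ (by omega) hr
    simp only [gb, e]; norm_num; omega

lemma e16_n (h : TF G) {S : Finset V} (hS : S.card = 16) (hi : ind G 5 S) (hD : DD G S = 62) :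
    (∀ v ∈ S, 3 ≤ dg G S v) ∧
    (S.filter (fun v => dg G S v = 3)).card = (S.filter (fun v => dg G S v = 5)).card + 2 ∧
    (S.filter (fun v => dg G S v = 5)).card ≤ 2 ∧
    ((S.filter (fun v => dg G S v = 5)).card = 2 → ∀ v ∈ S, (Z G S v : ℤ) = gb (dg G S v)) := by
  have hb : ∀ v ∈ S, 2 ≤ dg G S v ∧ dg G S v ≤ 5 := fun v hv =>
    ⟨(e16_Z h hS hi hD hv).1, (e16_Z h hS hi hD hv).2.1⟩
  have s0 := sum_deg (fun v => dg G S v) hb (fun _ => 1)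
  have s1 := sum_deg (fun v => dg G S v) hb (fun d => (d : ℤ))
  have s2 := sum_deg (fun v => dg G S v) hb (fun d => (d : ℤ) ^ 2)
  have s3 := sum_deg (fun v => dg G S v) hb gb
  have hz := sum_Z (G := G) S
  have hD' : ∑ v ∈ S, dg G S v = 62 := hD
  zify at hz hD'
  rw [hD'] at s1
  rw [← hz] at s2
  have hle : ∑ v ∈ S, (Z G S v : ℤ) ≤ ∑ v ∈ S, gb (dg G S v) :=
    sum_le_sum fun v hv => (e16_Z h hS hi hD hv).2.2
  have g2 : gb 2 = 5 := rfl
  have g3 : gb 3 = 11 := rfl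
  have g4 : gb 4 = 16 := rfl
  have g5 : gb 5 = 21 := rfl
  simp only [sum_const, hS, g2, g3, g4, g5] at s0 s1 s2 s3
  norm_num at s0 s1 s2 s3
  have n2 : (S.filter (fun v => dg G S v = 2)).card = 0 := by
    by_contra hne
    have e2 : (S.filter (fun v => dg G S v = 2)).card = 1 := by omega
    have e3 : (S.filter (fun v => dg G S v = 3)).card = 0 := by omega
    obtain ⟨v, hv⟩ := card_eq_one.1 e2
    have hv' : v ∈ S.filter (fun v => dg G S v = 2) := by rw [hv]; simp
    rw [mem_filter] at hv'
    have hz := (e16_Z h hS hi hD hv'.1).2.2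
    rw [hv'.2] at hz
    have : ∑ w ∈ nb G S v, 4 ≤ Z G S v := by
      apply sum_le_sum
      intro w hw
      have hwS := (mem_nb.1 hw).1
      have hw2 : dg G S w ≠ 2 := by
        intro e
        have : w ∈ S.filter (fun v => dg G S v = 2) := by simp [hwS, e]
        rw [hv] at this
        rw [mem_singleton] at this
        rw [this] at hw
        exact G.loopless.irrefl _ (mem_nb.1 hw).2
      have hw3 : dg G S w ≠ 3 := by
        intro e
        rw [card_eq_zero, filter_eq_empty_iff] at e3
        exact e3 hwS e
      have := hb w hwS
      omega
    rw [sum_const, show (nb G S v).card = 2 from hv'.2] at this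
    rw [g2] at hz
    norm_num at this; omega
  refine ⟨?_, by omega, by omega, ?_⟩
  · intro v hv
    have := hb v hv
    have : dg G S v ≠ 2 := by
      intro e
      rw [card_eq_zero, filter_eq_empty_iff] at n2
      exact n2 hv e
    omega
  · intro e5 v hv
    have heq : ∑ v ∈ S, (Z G S v : ℤ) = ∑ v ∈ S, gb (dg G S v) := by omega
    exact (sum_eq_sum_iff_of_le (fun v hv => (e16_Z h hS hi hD hv).2.2)).1 heq v hv

/-- fact F -/
lemma e16_F (h : TF G) {S : Finset V} (hS : S.card = 16) (hi : ind G 5 S)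
    {r w : V} (hr : r ∈ S) (hr3 : dg G S r = 3) (hw : w ∈ S) (hne : w ≠ r) (hna : ¬ G.Adj r w) :
    dg G (nb G S r) w + 3 ≤ dg G S w := by
  have hwK : w ∈ rest G S r := mem_rest.2 ⟨hw, hne, hna⟩
  have h1 := dg_rest hr hwK
  have h2 := card_rest (G := G) hr
  have h3 := card_rest (G := G) hwK
  have h4 := ind_rest (ind_rest hi hr) hwK
  have h5 : 3 ≤ dg G (rest G S r) w := by
    by_contra hc
    exact N3_9 h _ (by omega) h4
  omega

lemma e16_common (h : TF G) {S : Finset V} (hS : S.card = 16) (hi : ind G 5 S)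
    {r w x : V} (hr : r ∈ S) (hr3 : dg G S r = 3) (hw : w ∈ S) (hw3 : dg G S w = 3)
    (hne : w ≠ r) (hx : x ∈ S) (a1 : G.Adj x r) (a2 : G.Adj x w) : False := by
  have := e16_F h hS hi hr hr3 hw hne (h x r w a1 a2)
  exact dg_eq_zero (S := nb G S r) (v := w) (by omega) (mem_nb.2 ⟨hx, a1.symm⟩) a2.symm

lemma e16_R (h : TF G) {S : Finset V} (hS : S.card = 16) (hi : ind G 5 S) (hD : DD G S = 62)
    {r : V} (hr : r ∈ S) (hr3 : dg G S r = 3) :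
    dg G (S.filter (fun v => dg G S v = 3)) r = 1 ∧ (∀ w ∈ nb G S r, dg G S w ≤ 4) ∧
    Z G S r = 11 := by
  obtain ⟨h3, -, -, -⟩ := e16_n h hS hi hD
  have hz := (e16_Z h hS hi hD hr).2.2
  rw [hr3, show gb 3 = 11 from rfl] at hz
  have hle : dg G (S.filter (fun v => dg G S v = 3)) r ≤ 1 := by
    apply card_le_one.2
    intro a ha b hb
    rw [mem_nb, mem_filter] at ha hb
    by_contra hne
    exact e16_common h hS hi hb.1.1 hb.1.2 ha.1.1 ha.1.2 hne hr hb.2 ha.2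
  have e1 : dg G (S.filter (fun v => dg G S v = 3)) r =
      ∑ w ∈ nb G S r, if dg G S w = 3 then 1 else 0 := by
    rw [← card_filter]; unfold dg nb; congr 1; ext x; simp; tauto
  have e2 : ∀ w ∈ nb G S r, 4 ≤ dg G S w + if dg G S w = 3 then 1 else 0 := by
    intro w hw
    have := h3 w (mem_nb.1 hw).1
    split_ifs <;> omega
  have e3 : ∑ w ∈ nb G S r, 4 ≤ Z G S r + dg G (S.filter (fun v => dg G S v = 3)) r := by
    rw [e1]; unfold Z; rw [← sum_add_distrib]; exact sum_le_sum e2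
  have e4 : ∑ w ∈ nb G S r, 4 = 12 := by
    rw [sum_const, show (nb G S r).card = 3 from hr3]; rfl
  refine ⟨by omega, ?_, by omega⟩
  intro w hw
  by_contra hc
  have : ∑ w ∈ nb G S r, 4 < Z G S r + dg G (S.filter (fun v => dg G S v = 3)) r := by
    rw [e1]; unfold Z; rw [← sum_add_distrib]
    exact sum_lt_sum e2 ⟨w, hw, by split_ifs <;> omega⟩
  omega

lemma e16_even (h : TF G) {S : Finset V} (hS : S.card = 16) (hi : ind G 5 S) (hD : DD G S = 62) :
    (S.filter (fun v => dg G S v = 5)).card = 0 ∨ (S.filter (fun v => dg G S v = 5)).card = 2 := by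
  obtain ⟨-, h1, h2, -⟩ := e16_n h hS hi hD
  obtain ⟨e, he⟩ := DD_even (G := G) (S.filter (fun v => dg G S v = 3))
  have : DD G (S.filter (fun v => dg G S v = 3)) = (S.filter (fun v => dg G S v = 3)).card := by
    rw [card_eq_sum_ones]; unfold DD
    apply sum_congr rfl
    intro r hr; rw [mem_filter] at hr
    exact (e16_R h hS hi hD hr.1 hr.2).1
  omega

lemma e16_case0 (h : TF G) {S : Finset V} (hS : S.card = 16) (hi : ind G 5 S) (hD : DD G S = 62)
    (h5 : (S.filter (fun v => dg G S v = 5)).card = 0) : False := by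
  obtain ⟨h3, hR, -, -⟩ := e16_n h hS hi hD
  rw [h5] at hR
  obtain ⟨r, hr⟩ := card_pos.1 (show 0 < (S.filter (fun v => dg G S v = 3)).card by omega)
  have hrR := hr
  rw [mem_filter] at hr
  obtain ⟨hr, hr3⟩ := hr
  obtain ⟨hd1, -, hZ⟩ := e16_R h hS hi hD hr hr3
  obtain ⟨p, hpR, hrp⟩ := dg_pos hd1.ge
  set C := nb G S r with hC
  set K := rest G S r with hK
  have hCc : C.card = 3 := hr3
  have hKc : K.card = 12 := by have := card_rest (G := G) hr; rw [← hK] at this; omega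
  have hKi : ind G 4 K := ind_rest hi hr
  have hKD : DD G K = 40 := by have := DD_rest h hr; rw [← hK] at this; omega
  have hK4 : ∀ w ∈ K, dg G S w = 4 := by
    intro w hw
    rw [hK, mem_rest] at hw
    have a1 := h3 w hw.1
    have a2 := (e16_Z h hS hi hD hw.1).2.1
    have a3 : dg G S w ≠ 5 := by
      intro e; rw [card_eq_zero, filter_eq_empty_iff] at h5; exact h5 hw.1 e
    have a4 : dg G S w ≠ 3 := by
      intro e
      have hs : ({r, p, w} : Finset V) ⊆ S.filter (fun v => dg G S v = 3) := by
        intro z hz; simp only [mem_insert, mem_singleton] at hz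
        rcases hz with rfl | rfl | rfl
        · exact hrR
        · exact hpR
        · simp [hw.1, e]
      have := card_le_card hs
      rw [card_eq_three.2 ⟨r, p, w, hrp.ne, hw.2.1.symm, fun e => hw.2.2 (e ▸ hrp), rfl⟩] at this
      omega
    omega
  have hKK : ∀ w ∈ K, dg G K w + dg G C w = 4 := by
    intro w hw
    have := dg_rest hr hw
    rw [hK4 w hw] at this; exact this.symm
  have hCw : ∀ w ∈ K, dg G C w ≤ 1 := by
    intro w hw
    have h4 := hK4 w hw
    rw [hK, mem_rest] at hw
    have := e16_F h hS hi hr hr3 hw.1 hw.2.1 hw.2.2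
    rw [← hC] at this
    omega
  have hsum : ∑ w ∈ K, dg G C w = 8 := by
    rw [dg_swap]
    have : Z G S r = ∑ c ∈ C, dg G K c + 3 := by
      unfold Z; rw [sum_congr rfl (fun w hw => dg_nb h hr hw), sum_add_distrib, ← hC, ← hK]
      simp [hCc]
    omega
  set O := K.filter (fun w => dg G C w = 1) with hO
  set T := K.filter (fun w => ¬ dg G C w = 1) with hT
  have hKu : K = O ∪ T := (filter_union_filter_not_eq _ K).symm
  have hdisj : Disjoint O T := disjoint_filter_filter_not _ _ _
  have hOc : O.card = 8 := by
    rw [hO, card_filter, ← hsum]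
    apply sum_congr rfl
    intro w hw
    have := hCw w hw
    split_ifs <;> omega
  have hTc : T.card = 4 := by
    have : K.card = O.card + T.card := by rw [← card_union_of_disjoint hdisj, ← hKu]
    omega
  have hOK : O ⊆ K := filter_subset _ _
  have hTK : T ⊆ K := filter_subset _ _
  have hO1 : ∀ w ∈ O, dg G C w = 1 := fun w hw => (mem_filter.1 hw).2
  have hT0 : ∀ w ∈ T, dg G C w = 0 := fun w hw => by
    have h1 := (mem_filter.1 hw).2
    have h2 := hCw w (hTK hw)
    omega
  have hZK : ∀ w ∈ K, Z G K w = 3 * dg G K w + dg G T w := by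
    intro w hw
    have e1 : dg G T w = ∑ x ∈ nb G K w, if ¬ dg G C x = 1 then 1 else 0 := dg_filter _ _ _
    rw [e1]; unfold Z
    have : 3 * dg G K w = ∑ x ∈ nb G K w, 3 := by rw [sum_const, smul_eq_mul, mul_comm]; rfl
    rw [this, ← sum_add_distrib]
    apply sum_congr rfl
    intro x hx
    have hx := (mem_nb.1 hx).1
    have := hKK x hx
    have := hCw x hx
    split_ifs <;> omega
  have hTt : ∀ t ∈ T, dg G T t ≤ 2 := by
    intro t ht
    have e1 := hKK t (hTK ht)
    have e2 := hT0 t ht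
    have e3 := card_rest (G := G) (hTK ht)
    have e4 := L3_7 h _ (by omega) (ind_rest hKi (hTK ht))
    have e5 := DD_rest h (hTK ht)
    have e6 := hZK t (hTK ht)
    omega
  have hTo : ∀ o ∈ O, dg G T o ≤ 1 := by
    intro t ht
    have e1 := hKK t (hOK ht)
    have e2 := hO1 t ht
    have e3 := card_rest (G := G) (hOK ht)
    have e4 := L3_8 h _ (by omega) (ind_rest hKi (hOK ht))
    have e5 := DD_rest h (hOK ht)
    have e6 := hZK t (hOK ht)
    omega
  have hOT : ∀ t ∈ T, dg G O t + dg G T t = 4 := by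
    intro t ht
    have e1 := hKK t (hTK ht)
    have e2 := hT0 t ht
    rw [hKu, dg_union hdisj] at e1
    omega
  have hs1 : ∑ t ∈ T, dg G O t ≤ 8 := by
    rw [dg_swap]
    calc _ ≤ ∑ o ∈ O, 1 := sum_le_sum hTo
      _ = 8 := by simp [hOc]
  have hO2 : ∀ t ∈ T, dg G O t = 2 := by
    intro t ht
    by_contra hne
    have : ∑ t ∈ T, 2 < ∑ t ∈ T, dg G O t := by
      apply sum_lt_sum
      · intro x hx
        have := hOT x hx; have := hTt x hx; omega
      · exact ⟨t, ht, by have := hOT t ht; have := hTt t ht; omega⟩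
    simp only [sum_const, hTc] at this
    norm_num at this; omega
  obtain ⟨t1, ht1⟩ := card_pos.1 (show 0 < T.card by omega)
  obtain ⟨t3, ht3⟩ := card_pos.1 (show 0 < (rest G T t1).card by
    have := card_rest (G := G) ht1
    have := hOT t1 ht1
    have := hO2 t1 ht1
    omega)
  rw [mem_rest] at ht3
  obtain ⟨ht3, hne, hna⟩ := ht3
  set O' := O \ (nb G O t1 ∪ nb G O t3) with hO'
  have hO'c : 4 ≤ O'.card := by
    have a1 := le_card_sdiff (nb G O t1 ∪ nb G O t3) O
    rw [← hO'] at a1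
    have a2 := card_union_le (nb G O t1) (nb G O t3)
    have a3 : (nb G O t1).card = 2 := hO2 t1 ht1
    have a4 : (nb G O t3).card = 2 := hO2 t3 ht3
    omega
  have hO'O : O' ⊆ O := sdiff_subset
  obtain ⟨c, hc, hc2⟩ : ∃ c ∈ C, 2 ≤ dg G O' c := by
    by_contra hcon
    push Not at hcon
    have a1 : ∑ c ∈ C, dg G O' c ≤ ∑ c ∈ C, 1 := sum_le_sum fun c hc => by
      have := hcon c hc; omega
    rw [dg_swap, sum_congr rfl (fun o ho => hO1 o (hO'O ho))] at a1
    simp [hCc] at a1; omega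
  have hJ : nb G O' c ⊆ O' := filter_subset _ _
  have i1 : Indep G ({t1, t3} : Finset V) := by
    have : Indep G ({t3} : Finset V) := by
      intro a ha b hb; simp at ha hb; subst ha; subst hb; exact G.loopless.irrefl _
    exact indep_insert this (by simpa using hna)
  have hCind : Indep G C := indep_nb h S r
  have i2 : Indep G (nb G O' c ∪ C.erase c) := by
    apply indep_union (indep_nb h _ _)
    · intro a ha b hb; exact hCind a (mem_of_mem_erase ha) b (mem_of_mem_erase hb)
    · intro a ha b hb hab
      have hb' := mem_erase.1 hb
      exact hb'.1 (dg_le_one (hO1 a (hO'O (hJ ha))).le hb'.2 hc hab (mem_nb.1 ha).2.symm)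
  have i3 : Indep G (({t1, t3} : Finset V) ∪ (nb G O' c ∪ C.erase c)) := by
    apply indep_union i1 i2
    intro a ha b hb hab
    have haT : a ∈ T := by simp at ha; rcases ha with rfl | rfl <;> assumption
    rcases mem_union.1 hb with hb | hb
    · have := hJ hb
      rw [hO', mem_sdiff, mem_union, mem_nb, mem_nb] at this
      simp at ha; rcases ha with rfl | rfl <;> tauto
    · exact dg_eq_zero (hT0 a haT) (mem_of_mem_erase hb) hab
  have hCS : C ⊆ S := filter_subset _ _
  have hKS : K ⊆ S := filter_subset _ _
  have hCK : ∀ x ∈ C, x ∉ K := fun x hx hk => (mem_rest.1 hk).2.2 (mem_nb.1 hx).2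
  have hc6 := hi _ ?_ i3
  · rw [card_union_of_disjoint, card_union_of_disjoint, card_erase_of_mem hc,
      card_pair hne.symm] at hc6
    · have : (nb G O' c).card = dg G O' c := rfl
      omega
    · rw [disjoint_left]; intro x hx hx'
      exact hCK x (mem_of_mem_erase hx') (hOK (hO'O (hJ hx)))
    · rw [disjoint_left]; intro x hx hx'
      have hxT : x ∈ T := by simp at hx; rcases hx with rfl | rfl <;> assumption
      rcases mem_union.1 hx' with hb | hb
      · exact disjoint_left.1 hdisj (hO'O (hJ hb)) hxT
      · exact hCK x (mem_of_mem_erase hb) (hTK hxT)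
  · intro x hx
    rcases mem_union.1 hx with hx | hx
    · have hxT : x ∈ T := by simp at hx; rcases hx with rfl | rfl <;> assumption
      exact hKS (hTK hxT)
    · rcases mem_union.1 hx with hb | hb
      · exact hKS (hOK (hO'O (hJ hb)))
      · exact hCS (mem_of_mem_erase hb)

lemma dg_union_le (S T : Finset V) (v : V) : dg G (S ∪ T) v ≤ dg G S v + dg G T v := by
  unfold dg nb
  rw [filter_union]; exact card_union_le _ _

lemma indep_cons {I : Finset V} {v : V} (hI : Indep G I) (hv : ∀ w ∈ I, ¬ G.Adj v w) :
    Indep G (insert v I) := indep_insert hI hv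

lemma indep_single (v : V) : Indep G ({v} : Finset V) := by
  intro a ha b hb; simp at ha hb; subst ha; subst hb; exact G.loopless.irrefl _

lemma e16_q (h : TF G) {S : Finset V} (hS : S.card = 16) (hi : ind G 5 S) (hD : DD G S = 62)
    {q : V} (hq : q ∈ S) (hq5 : dg G S q = 5) (hZ : Z G S q = 21) {w : V} (hw : w ∈ S)
    (hne : w ≠ q) (hna : ¬ G.Adj q w) : dg G (nb G S q) w + 2 = dg G S w := by
  have hwM : w ∈ rest G S q := mem_rest.2 ⟨hw, hne, hna⟩
  have e0 := dg_rest hq hwM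
  obtain ⟨M, hM⟩ : ∃ M, M = rest G S q := ⟨_, rfl⟩
  have hMi : ind G 4 M := hM ▸ ind_rest hi hq
  have hMc : M.card = 10 := by have := card_rest (G := G) hq; rw [← hM] at this; omega
  have hMD : DD G M = 20 := by have := DD_rest h hq; rw [← hM] at this; omega
  have m1 : ∀ x ∈ M, 1 ≤ dg G M x := by
    intro x hx
    by_contra hc
    have := card_rest (G := G) hx
    exact N3_9 h _ (by omega) (ind_rest hMi hx)
  have m2 : ∀ x ∈ M, 2 ≤ dg G M x := by
    intro x hx
    by_contra hc
    have hx1 : dg G M x = 1 := by have := m1 x hx; omega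
    have a1 := card_rest (G := G) hx
    have a2 := L3_8 h _ (by omega) (ind_rest hMi hx)
    have a3 := DD_rest h hx
    have a4 : ∑ y ∈ nb G M x, 1 ≤ Z G M x := sum_le_sum fun y hy => m1 y (mem_nb.1 hy).1
    rw [← card_eq_sum_ones, show (nb G M x).card = 1 from hx1] at a4
    omega
  rw [← hM] at e0 hwM
  have : dg G M w = 2 := by
    by_contra hc
    have : ∑ x ∈ M, 2 < DD G M := sum_lt_sum m2 ⟨w, hwM, by have := m2 w hwM; omega⟩
    rw [sum_const, hMc, hMD] at this; norm_num at this
  omega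

lemma e16_case2 (h : TF G) {S : Finset V} (hS : S.card = 16) (hi : ind G 5 S) (hD : DD G S = 62)
    (h5 : (S.filter (fun v => dg G S v = 5)).card = 2) : False := by
  obtain ⟨h3, hR, -, ht⟩ := e16_n h hS hi hD
  have ht := ht h5
  have hle5 : ∀ v ∈ S, dg G S v ≤ 5 := fun v hv => (e16_Z h hS hi hD hv).2.1
  have hZ5 : ∀ v ∈ S, dg G S v = 5 → Z G S v = 21 := by
    intro v hv e
    have := ht v hv
    rw [e, show gb 5 = 21 from rfl] at this; omega
  rw [h5] at hR
  obtain ⟨R, hRd⟩ : ∃ R, R = S.filter (fun v => dg G S v = 3) := ⟨_, rfl⟩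
  have mR : ∀ x, x ∈ R ↔ x ∈ S ∧ dg G S x = 3 := by intro x; rw [hRd, mem_filter]
  have hRc : R.card = 4 := by rw [hRd]; omega
  have hR1 : ∀ r ∈ R, dg G R r = 1 := by
    intro r hr; rw [mR] at hr; rw [hRd]; exact (e16_R h hS hi hD hr.1 hr.2).1
  have hR4 : ∀ r ∈ R, ∀ w ∈ S, G.Adj r w → dg G S w ≤ 4 := by
    intro r hr w hw a; rw [mR] at hr
    exact (e16_R h hS hi hD hr.1 hr.2).2.1 w (mem_nb.2 ⟨hw, a⟩)
  -- common neighbours of R vertices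
  have hcom : ∀ r ∈ R, ∀ s ∈ R, ∀ x ∈ S, G.Adj r x → G.Adj s x → r = s := by
    intro r hr s hs x hx a b
    by_contra hne
    rw [mR] at hr hs
    exact e16_common h hS hi hs.1 hs.2 hr.1 hr.2 hne hx b.symm a.symm
  obtain ⟨q1, hq1⟩ := card_pos.1 (show 0 < (S.filter (fun v => dg G S v = 5)).card by omega)
  rw [mem_filter] at hq1
  obtain ⟨hq1, hq15⟩ := hq1
  obtain ⟨q2, hq2, hq25, hqq⟩ : ∃ q2 ∈ S, dg G S q2 = 5 ∧ G.Adj q1 q2 := by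
    by_contra hc
    push Not at hc
    have : Z G S q1 ≤ ∑ w ∈ nb G S q1, 4 := sum_le_sum fun w hw => by
      rw [mem_nb] at hw
      have a1 := hle5 w hw.1
      have a2 : dg G S w ≠ 5 := fun e => hc w hw.1 e hw.2
      omega
    rw [sum_const, show (nb G S q1).card = 5 from hq15, hZ5 q1 hq1 hq15] at this
    norm_num at this
  have only5 : ∀ w ∈ S, dg G S w = 5 → w = q1 ∨ w = q2 := by
    intro w hw e
    by_contra hc
    push Not at hc
    have hs : ({w, q1, q2} : Finset V) ⊆ S.filter (fun v => dg G S v = 5) := by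
      intro z hz; simp only [mem_insert, mem_singleton] at hz
      rcases hz with rfl | rfl | rfl <;> simp [*]
    have := card_le_card hs
    rw [card_eq_three.2 ⟨w, q1, q2, hc.1, hc.2, hqq.ne, rfl⟩] at this
    omega
  obtain ⟨Q1, hQ1⟩ : ∃ Q, Q = nb G S q1 := ⟨_, rfl⟩
  obtain ⟨Q2, hQ2⟩ : ∃ Q, Q = nb G S q2 := ⟨_, rfl⟩
  have mQ1 : ∀ x, x ∈ Q1 ↔ x ∈ S ∧ G.Adj q1 x := by intro x; rw [hQ1, mem_nb]
  have mQ2 : ∀ x, x ∈ Q2 ↔ x ∈ S ∧ G.Adj q2 x := by intro x; rw [hQ2, mem_nb]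
  have hq1' : ∀ w ∈ S, w ≠ q1 → ¬ G.Adj q1 w → dg G Q1 w + 2 = dg G S w := by
    intro w hw a b; rw [hQ1]; exact e16_q h hS hi hD hq1 hq15 (hZ5 _ hq1 hq15) hw a b
  have hq2' : ∀ w ∈ S, w ≠ q2 → ¬ G.Adj q2 w → dg G Q2 w + 2 = dg G S w := by
    intro w hw a b; rw [hQ2]; exact e16_q h hS hi hD hq2 hq25 (hZ5 _ hq2 hq25) hw a b
  have hRQ1 : ∀ r ∈ R, ¬ G.Adj q1 r := fun r hr a => by
    have := hR4 r hr q1 hq1 a.symm; omega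
  have hRQ2 : ∀ r ∈ R, ¬ G.Adj q2 r := fun r hr a => by
    have := hR4 r hr q2 hq2 a.symm; omega
  have hQ12 : ∀ x, G.Adj q1 x → ¬ G.Adj q2 x := fun x a b => h q1 q2 x hqq a b
  have hRd1 : ∀ r ∈ R, dg G Q1 r = 1 := by
    intro r hr
    have hr' := (mR r).1 hr
    have := hq1' r hr'.1 (by rintro rfl; omega) (hRQ1 r hr)
    omega
  have hRd2 : ∀ r ∈ R, dg G Q2 r = 1 := by
    intro r hr
    have hr' := (mR r).1 hr
    have := hq2' r hr'.1 (by rintro rfl; omega) (hRQ2 r hr)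
    omega
  have exc : ∀ r ∈ R, ∃ c, c ∈ Q1 ∧ G.Adj r c := by
    intro r hr
    obtain ⟨c, a, b⟩ := dg_pos (hRd1 r hr).ge
    exact ⟨c, a, b⟩
  have exd : ∀ r ∈ R, ∃ c, c ∈ Q2 ∧ G.Adj r c := by
    intro r hr
    obtain ⟨c, a, b⟩ := dg_pos (hRd2 r hr).ge
    exact ⟨c, a, b⟩
  have exp : ∀ r ∈ R, ∃ c, c ∈ R ∧ G.Adj r c := by
    intro r hr
    obtain ⟨c, a, b⟩ := dg_pos (hR1 r hr).ge
    exact ⟨c, a, b⟩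
  obtain ⟨O, hO⟩ : ∃ O, O = S \ (Q1 ∪ Q2 ∪ R) := ⟨_, rfl⟩
  have hsub : Q1 ∪ Q2 ∪ R ⊆ S := by
    intro x hx
    simp only [mem_union, mQ1, mQ2, mR] at hx; tauto
  have hSu : (Q1 ∪ Q2 ∪ R) ∪ O = S := by rw [hO]; exact union_sdiff_of_subset hsub
  have hOc : O.card = 2 := by
    rw [hO, card_sdiff_of_subset hsub, card_union_of_disjoint, card_union_of_disjoint, hRc, hS, hQ1, hQ2,
      show (nb G S q1).card = 5 from hq15, show (nb G S q2).card = 5 from hq25]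
    · rw [disjoint_left]; intro x a b
      exact hQ12 x ((mQ1 x).1 a).2 ((mQ2 x).1 b).2
    · rw [disjoint_left]; intro x a b
      rcases mem_union.1 a with a | a
      · exact hRQ1 x b ((mQ1 x).1 a).2
      · exact hRQ2 x b ((mQ2 x).1 a).2
  have hO1 : ∀ o ∈ O, o ∈ S ∧ ¬ G.Adj q1 o ∧ ¬ G.Adj q2 o ∧ dg G S o = 4 := by
    intro o ho
    rw [hO, mem_sdiff] at ho
    obtain ⟨ho, hn⟩ := ho
    simp only [mem_union, mQ1, mQ2, mR, ho, true_and, not_or] at hn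
    obtain ⟨⟨n1, n2⟩, n3⟩ := hn
    refine ⟨ho, n1, n2, ?_⟩
    have a1 := h3 o ho
    have a2 := hle5 o ho
    have a3 : dg G S o ≠ 5 := by
      intro e
      rcases only5 o ho e with rfl | rfl
      · exact n2 hqq.symm
      · exact n1 hqq
    omega
  have hOQ1 : ∀ o ∈ O, dg G Q1 o = 2 := by
    intro o ho
    obtain ⟨a, b, c, d⟩ := hO1 o ho
    have := hq1' o a (by rintro rfl; omega) b
    omega
  have hOQ2 : ∀ o ∈ O, dg G Q2 o = 2 := by
    intro o ho
    obtain ⟨a, b, c, d⟩ := hO1 o ho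
    have := hq2' o a (by rintro rfl; omega) c
    omega
  have hO3 : ∀ x ∈ O, ∀ y ∈ O, ∀ z ∈ O, x ≠ y → y ≠ z → x = z := by
    intro x hx y hy z hz a b
    by_contra hc
    have hs : ({x, y, z} : Finset V) ⊆ O := by
      intro w hw; simp only [mem_insert, mem_singleton] at hw
      rcases hw with rfl | rfl | rfl <;> assumption
    have := card_le_card hs
    rw [card_eq_three.2 ⟨x, y, z, a, hc, b, rfl⟩] at this
    omega
  have nR1 : ∀ x ∈ Q1, x ∉ R := fun x hx hr => hRQ1 x hr ((mQ1 x).1 hx).2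
  have nR2 : ∀ x ∈ Q2, x ∉ R := fun x hx hr => hRQ2 x hr ((mQ2 x).1 hx).2
  have d4 : ∀ x ∈ S, x ∉ R → ∀ r ∈ R, G.Adj r x → dg G S x = 4 := by
    intro x hx hn r hr a
    have a1 := hR4 r hr x hx a
    have a2 := h3 x hx
    have a3 : dg G S x ≠ 3 := fun e => hn ((mR x).2 ⟨hx, e⟩)
    omega
  have dR1 : ∀ x ∈ S, dg G R x ≤ 1 := by
    intro x hx
    apply card_le_one.2
    intro a ha b hb
    rw [mem_nb] at ha hb
    exact hcom a ha.1 b hb.1 x hx ha.2.symm hb.2.symm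
  -- neighbours of c
  have c2 : ∀ x ∈ Q1, ∀ r ∈ R, G.Adj r x → dg G Q2 x = 2 := by
    intro x hx r hr a
    have hx' := (mQ1 x).1 hx
    have e := d4 x hx'.1 (nR1 x hx) r hr a
    have := hq2' x hx'.1 (by rintro rfl; omega) (hQ12 x hx'.2)
    omega
  have c2' : ∀ x ∈ Q2, ∀ r ∈ R, G.Adj r x → dg G Q1 x = 2 := by
    intro x hx r hr a
    have hx' := (mQ2 x).1 hx
    have e := d4 x hx'.1 (nR2 x hx) r hr a
    have := hq1' x hx'.1 (by rintro rfl; omega) (fun b => hQ12 x b hx'.2)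
    omega
  have cO : ∀ x ∈ Q1, ∀ r ∈ R, G.Adj r x → ∃ o, o ∈ O ∧ G.Adj x o := by
    intro x hx r hr a
    have hx' := (mQ1 x).1 hx
    have e := d4 x hx'.1 (nR1 x hx) r hr a
    have e1 : dg G Q1 x = 0 := dg_zero fun w hw => h q1 x w hx'.2 ((mQ1 w).1 hw).2
    have e2 := c2 x hx r hr a
    have e3 := dR1 x hx'.1
    have e4 := dg_union_le (G := G) (Q1 ∪ Q2 ∪ R) O x
    have e5 := dg_union_le (G := G) (Q1 ∪ Q2) R x
    have e6 := dg_union_le (G := G) Q1 Q2 x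
    rw [hSu] at e4
    obtain ⟨o, a, b⟩ := dg_pos (show 1 ≤ dg G O x by omega)
    exact ⟨o, a, b⟩
  have dO : ∀ x ∈ Q2, ∀ r ∈ R, G.Adj r x → ∃ o, o ∈ O ∧ G.Adj x o := by
    intro x hx r hr a
    have hx' := (mQ2 x).1 hx
    have e := d4 x hx'.1 (nR2 x hx) r hr a
    have e1 : dg G Q2 x = 0 := dg_zero fun w hw => h q2 x w hx'.2 ((mQ2 w).1 hw).2
    have e2 := c2' x hx r hr a
    have e3 := dR1 x hx'.1
    have e4 := dg_union_le (G := G) (Q1 ∪ Q2 ∪ R) O x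
    have e5 := dg_union_le (G := G) (Q1 ∪ Q2) R x
    have e6 := dg_union_le (G := G) Q1 Q2 x
    rw [hSu] at e4
    obtain ⟨o, a, b⟩ := dg_pos (show 1 ≤ dg G O x by omega)
    exact ⟨o, a, b⟩
  have : Nonempty V := ⟨q1⟩
  choose! c hcQ hcr using exc
  choose! d hdQ hdr using exd
  choose! p hpR hpr using exp
  have exo : ∀ r ∈ R, ∃ o, o ∈ O ∧ G.Adj (c r) o := fun r hr => cO _ (hcQ r hr) r hr (hcr r hr)
  have exo' : ∀ r ∈ R, ∃ o, o ∈ O ∧ G.Adj (d r) o := fun r hr => dO _ (hdQ r hr) r hr (hdr r hr)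
  choose! oc hoc hoca using exo
  choose! od hod hoda using exo'
  have cS : ∀ r ∈ R, c r ∈ S := fun r hr => ((mQ1 _).1 (hcQ r hr)).1
  have dS : ∀ r ∈ R, d r ∈ S := fun r hr => ((mQ2 _).1 (hdQ r hr)).1
  have ca : ∀ r ∈ R, ∀ s ∈ R, G.Adj (c r) s → r = s := fun r hr s hs a =>
    hcom r hr s hs (c r) (cS r hr) (hcr r hr) a.symm
  have da : ∀ r ∈ R, ∀ s ∈ R, G.Adj (d r) s → r = s := fun r hr s hs a =>
    hcom r hr s hs (d r) (dS r hr) (hdr r hr) a.symm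
  have ci : ∀ r ∈ R, ∀ s ∈ R, c r = c s → r = s := fun r hr s hs e =>
    ca r hr s hs (e ▸ (hcr s hs).symm)
  have di : ∀ r ∈ R, ∀ s ∈ R, d r = d s → r = s := fun r hr s hs e =>
    da r hr s hs (e ▸ (hdr s hs).symm)
  have cd : ∀ r ∈ R, ∀ s ∈ R, c r ≠ d s := fun r hr s hs e =>
    hQ12 _ ((mQ1 _).1 (hcQ r hr)).2 (e ▸ ((mQ2 _).1 (hdQ s hs)).2)
  -- at most one d neighbour
  have u1 : ∀ r ∈ R, ∀ s ∈ R, ∀ s' ∈ R, G.Adj (c r) (d s) → G.Adj (c r) (d s') → s = s' := by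
    intro r hr s hs s' hs' a b
    by_contra hne
    have hq : ∀ s ∈ R, q1 ≠ d s := by
      intro s hs e
      have := hR4 s hs _ (dS s hs) (hdr s hs)
      rw [← e] at this; omega
    have := three_le_dg (G := G) (S := Q2) (v := c r) ((mQ2 q1).2 ⟨hq1, hqq.symm⟩) (hdQ s hs) (hdQ s' hs')
      (hq s hs) (hq s' hs') (fun e => hne (di s hs s' hs' e)) ((mQ1 _).1 (hcQ r hr)).2.symm a b
    have := c2 _ (hcQ r hr) r hr (hcr r hr)
    omega
  have u2 : ∀ r ∈ R, ∀ s ∈ R, ∀ s' ∈ R, G.Adj (d r) (c s) → G.Adj (d r) (c s') → s = s' := by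
    intro r hr s hs s' hs' a b
    by_contra hne
    have hq : ∀ s ∈ R, q2 ≠ c s := by
      intro s hs e
      have := hR4 s hs _ (cS s hs) (hcr s hs)
      rw [← e] at this; omega
    have := three_le_dg (G := G) (S := Q1) (v := d r) ((mQ1 q2).2 ⟨hq2, hqq⟩) (hcQ s hs) (hcQ s' hs')
      (hq s hs) (hq s' hs') (fun e => hne (ci s hs s' hs' e)) ((mQ2 _).1 (hdQ r hr)).2.symm a b
    have := c2' _ (hdQ r hr) r hr (hdr r hr)
    omega
  have o1 : ∀ r ∈ R, oc r ≠ od r := by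
    intro r hr e
    have hr' := (mR r).1 hr
    obtain ⟨a1, a2, a3, a4⟩ := hO1 _ (hoc r hr)
    have hna : ¬ G.Adj r (oc r) := h (c r) r (oc r) (hcr r hr).symm (hoca r hr)
    have e1 := e16_F h hS hi hr'.1 hr'.2 a1 (by intro e; rw [e] at a4; omega) hna
    have e2 := two_le_dg (G := G) (S := nb G S r) (v := oc r) (mem_nb.2 ⟨cS r hr, hcr r hr⟩)
      (mem_nb.2 ⟨dS r hr, hdr r hr⟩) (cd r hr r hr) (hoca r hr).symm (e ▸ (hoda r hr).symm)
    omega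
  have o2 : ∀ r ∈ R, ∀ s ∈ R, G.Adj (c r) (d s) → oc r ≠ od s := by
    intro r hr s hs a e
    exact h (oc r) (c r) (d s) (hoca r hr).symm (e ▸ (hoda s hs).symm) a
  have t1 : ∀ r ∈ R, ∀ s ∈ R, ∀ t ∈ R, r ≠ s → r ≠ t → s ≠ t → oc r = oc s → oc r = oc t → False := by
    intro r hr s hs t ht n1 n2 n3 e1 e2
    have := three_le_dg (G := G) (S := Q1) (v := oc r) (hcQ r hr) (hcQ s hs) (hcQ t ht)
      (fun e => n1 (ci r hr s hs e)) (fun e => n2 (ci r hr t ht e)) (fun e => n3 (ci s hs t ht e))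
      (hoca r hr).symm (e1 ▸ (hoca s hs).symm) (e2 ▸ (hoca t ht).symm)
    have := hOQ1 _ (hoc r hr)
    omega
  have t2 : ∀ r ∈ R, ∀ s ∈ R, ∀ t ∈ R, r ≠ s → r ≠ t → s ≠ t → od r = od s → od r = od t → False := by
    intro r hr s hs t ht n1 n2 n3 e1 e2
    have := three_le_dg (G := G) (S := Q2) (v := od r) (hdQ r hr) (hdQ s hs) (hdQ t ht)
      (fun e => n1 (di r hr s hs e)) (fun e => n2 (di r hr t ht e)) (fun e => n3 (di s hs t ht e))
      (hoda r hr).symm (e1 ▸ (hoda s hs).symm) (e2 ▸ (hoda t ht).symm)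
    have := hOQ2 _ (hod r hr)
    omega
  have hpp : ∀ r ∈ R, ∀ s ∈ R, G.Adj r s → s = p r := fun r hr s hs a =>
    dg_le_one (hR1 r hr).le hs (hpR r hr) a (hpr r hr)
  have main : ∀ r ∈ R, ∀ s ∈ R, r ≠ s → ¬ G.Adj r s → G.Adj (c r) (d s) ∨ G.Adj (c s) (d r) := by
    intro r hr s hs hne hna
    by_contra hc
    push Not at hc
    have Rind : ¬ G.Adj (p r) (p s) := by
      intro a
      have e1 := hpp _ (hpR s hs) _ (hpR r hr) a.symm
      have e2 := hpp _ (hpR s hs) _ hs (hpr s hs).symm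
      rw [← e2] at e1
      exact hna (e1 ▸ hpr r hr)
    have pne : p r ≠ p s := by
      intro e
      exact hne (hcom r hr s hs (p r) ((mR _).1 (hpR r hr)).1 (hpr r hr) (e ▸ hpr s hs))
    have cp : ∀ x ∈ R, ∀ y ∈ R, ¬ G.Adj x y → ¬ G.Adj (c x) (p y) := by
      intro x hx y hy n a
      have := ca x hx _ (hpR y hy) a
      exact n (this ▸ (hpr y hy).symm)
    have dp : ∀ x ∈ R, ∀ y ∈ R, ¬ G.Adj x y → ¬ G.Adj (d x) (p y) := by
      intro x hx y hy n a
      have := da x hx _ (hpR y hy) a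
      exact n (this ▸ (hpr y hy).symm)
    have irr : ∀ x, ¬ G.Adj x x := fun x => G.loopless.irrefl x
    have cc : ¬ G.Adj (c r) (c s) := h q1 _ _ ((mQ1 _).1 (hcQ r hr)).2 ((mQ1 _).1 (hcQ s hs)).2
    have dd : ¬ G.Adj (d r) (d s) := h q2 _ _ ((mQ2 _).1 (hdQ r hr)).2 ((mQ2 _).1 (hdQ s hs)).2
    have crd : ∀ x ∈ R, ¬ G.Adj (c x) (d x) := fun x hx => h x _ _ (hcr x hx) (hdr x hx)
    have hna' : ¬ G.Adj s r := fun a => hna a.symm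
    have i1 : Indep G ({c r, d r, c s, d s, p r, p s} : Finset V) := by
      refine indep_cons (indep_cons (indep_cons (indep_cons (indep_cons (indep_single _) ?_) ?_) ?_) ?_) ?_
      · simpa using Rind
      · simpa using ⟨dp s hs r hr hna', dp s hs s hs (irr _)⟩
      · simpa using ⟨crd s hs, cp s hs r hr hna', cp s hs s hs (irr _)⟩
      · simpa using ⟨fun a => hc.2 a.symm, dd, dp r hr r hr (irr _), dp r hr s hs hna⟩
      · simpa using ⟨crd r hr, cc, hc.1, cp r hr r hr (irr _), cp r hr s hs hna⟩
    have cpn : ∀ x ∈ R, ∀ y ∈ R, c x ≠ p y := fun x hx y hy e => nR1 _ (hcQ x hx) (e ▸ hpR y hy)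
    have dpn : ∀ x ∈ R, ∀ y ∈ R, d x ≠ p y := fun x hx y hy e => nR2 _ (hdQ x hx) (e ▸ hpR y hy)
    have k := hi _ ?_ i1
    · rw [card_insert_of_notMem, card_insert_of_notMem, card_insert_of_notMem,
        card_insert_of_notMem, card_pair pne] at k
      · omega
      · simpa using ⟨dpn s hs r hr, dpn s hs s hs⟩
      · simpa using ⟨cd s hs s hs, cpn s hs r hr, cpn s hs s hs⟩
      · simpa using ⟨(cd s hs r hr).symm, fun e => hne (di r hr s hs e), dpn r hr r hr, dpn r hr s hs⟩
      · simpa using ⟨cd r hr r hr, fun e => hne (ci r hr s hs e), cd r hr s hs, cpn r hr r hr, cpn r hr s hs⟩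
    · intro x hx
      simp only [mem_insert, mem_singleton] at hx
      rcases hx with rfl | rfl | rfl | rfl | rfl | rfl
      · exact cS r hr
      · exact dS r hr
      · exact cS s hs
      · exact dS s hs
      · exact ((mR _).1 (hpR r hr)).1
      · exact ((mR _).1 (hpR s hs)).1
  -- the four vertices
  obtain ⟨r1, h1⟩ := card_pos.1 (show 0 < R.card by omega)
  obtain ⟨r3, h3'⟩ := card_pos.1 (show 0 < (rest G R r1).card by
    have := card_rest (G := G) h1
    have := hR1 r1 h1
    omega)
  rw [mem_rest] at h3'
  obtain ⟨h3R, n31, na13⟩ := h3'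
  have h4 := hpR r3 h3R
  have n43 : p r3 ≠ r3 := fun e => by have := hpr r3 h3R; rw [e] at this; exact G.loopless.irrefl _ this
  have n41 : p r3 ≠ r1 := fun e => na13 (by have := hpr r3 h3R; rw [e] at this; exact this.symm)
  have na14 : ¬ G.Adj r1 (p r3) := by
    intro a
    exact n31 (hcom r3 h3R r1 h1 _ ((mR _).1 h4).1 (hpr r3 h3R) a)
  generalize p r3 = r4 at *
  have m13 := main r1 h1 r3 h3R n31.symm na13
  have m14 := main r1 h1 r4 h4 n41.symm na14
  rcases m13 with a | a
  · have b : G.Adj (c r4) (d r1) := by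
      rcases m14 with b | b
      · exact absurd (u1 r1 h1 r3 h3R r4 h4 a b) n43.symm
      · exact b
    have e1 := hO3 _ (hod r1 h1) _ (hoc r1 h1) _ (hod r3 h3R) (o1 r1 h1).symm (o2 r1 h1 r3 h3R a)
    have e2 := hO3 _ (hod r1 h1) _ (hoc r4 h4) _ (hod r4 h4) (o2 r4 h4 r1 h1 b).symm (o1 r4 h4)
    exact t2 r1 h1 r3 h3R r4 h4 n31.symm n41.symm n43.symm e1 e2
  · have b : G.Adj (c r1) (d r4) := by
      rcases m14 with b | b
      · exact b
      · exact absurd (u2 r1 h1 r3 h3R r4 h4 a.symm b.symm) n43.symm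
    have e1 := hO3 _ (hoc r1 h1) _ (hod r1 h1) _ (hoc r3 h3R) (o1 r1 h1) (o2 r3 h3R r1 h1 a).symm
    have e2 := hO3 _ (hoc r1 h1) _ (hod r4 h4) _ (hoc r4 h4) (o2 r1 h1 r4 h4 b) (o1 r4 h4).symm
    exact t1 r1 h1 r3 h3R r4 h4 n31.symm n41.symm n43.symm e1 e2

lemma L5_16 (h : TF G) : LB G 5 16 32 := by
  intro S hS hi
  by_contra hc
  have h1 := L5_16w h S hS hi
  obtain ⟨e, he⟩ := DD_even (G := G) S
  have hD : DD G S = 62 := by omega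
  rcases e16_even h hS hi hD with h5 | h5
  · exact e16_case0 h hS hi hD h5
  · exact e16_case2 h hS hi hD h5
lemma N6_24 (h : TF G) : NB G 6 24 := by
  refine stepN h 50 4 (fun d hd hn => ?_) (by intro e; push_cast; omega)
  interval_cases d
  · exact Or.inl ((N5_19 h).mono (by omega))
  · exact Or.inl ((N5_19 h).mono (by omega))
  · exact Or.inl ((N5_19 h).mono (by omega))
  · exact Or.inl ((N5_19 h).mono (by omega))
  · exact Or.inl ((N5_19 h).mono (by omega))
  · exact Or.inr ⟨45, L5_18 h, by norm_num⟩
  · exact Or.inr ⟨38, L5_17 h, by norm_num⟩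
lemma L6_23 (h : TF G) : LB G 6 23 68 := by
  refine step h 68 38 5 (fun d hd hn => ?_) (by intro e; push_cast; omega)
  interval_cases d
  · exact Or.inl ((N5_19 h).mono (by omega))
  · exact Or.inl ((N5_19 h).mono (by omega))
  · exact Or.inl ((N5_19 h).mono (by omega))
  · exact Or.inl ((N5_19 h).mono (by omega))
  · exact Or.inr ⟨45, L5_18 h, by norm_num⟩
  · exact Or.inr ⟨38, L5_17 h, by norm_num⟩
  · exact Or.inr ⟨32, L5_16 h, by norm_num⟩
lemma L6_22 (h : TF G) : LB G 6 22 59 := by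
  refine step h 59 37 4 (fun d hd hn => ?_) (by intro e; push_cast; omega)
  interval_cases d
  · exact Or.inl ((N5_19 h).mono (by omega))
  · exact Or.inl ((N5_19 h).mono (by omega))
  · exact Or.inl ((N5_19 h).mono (by omega))
  · exact Or.inr ⟨45, L5_18 h, by norm_num⟩
  · exact Or.inr ⟨38, L5_17 h, by norm_num⟩
  · exact Or.inr ⟨32, L5_16 h, by norm_num⟩
  · exact Or.inr ⟨25, L5_15 h, by norm_num⟩
lemma L6_21 (h : TF G) : LB G 6 21 50 := by
  refine step h 50 40 2 (fun d hd hn => ?_) (by intro e; push_cast; omega)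
  interval_cases d
  · exact Or.inl ((N5_19 h).mono (by omega))
  · exact Or.inl ((N5_19 h).mono (by omega))
  · exact Or.inr ⟨45, L5_18 h, by norm_num⟩
  · exact Or.inr ⟨38, L5_17 h, by norm_num⟩
  · exact Or.inr ⟨32, L5_16 h, by norm_num⟩
  · exact Or.inr ⟨25, L5_15 h, by norm_num⟩
  · exact Or.inr ⟨19, L5_14 h, by norm_num⟩
lemma L6_20 (h : TF G) : LB G 6 20 42 := by
  refine step h 42 29 3 (fun d hd hn => ?_) (by intro e; push_cast; omega)
  interval_cases d
  · exact Or.inl ((N5_19 h).mono (by omega))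
  · exact Or.inr ⟨45, L5_18 h, by norm_num⟩
  · exact Or.inr ⟨38, L5_17 h, by norm_num⟩
  · exact Or.inr ⟨32, L5_16 h, by norm_num⟩
  · exact Or.inr ⟨25, L5_15 h, by norm_num⟩
  · exact Or.inr ⟨19, L5_14 h, by norm_num⟩
  · exact Or.inr ⟨14, L5_13 h, by norm_num⟩
lemma N7_30 (h : TF G) : NB G 7 30 := by
  refine stepN h 80 4 (fun d hd hn => ?_) (by intro e; push_cast; omega)
  interval_cases d
  · exact Or.inl ((N6_24 h).mono (by omega))
  · exact Or.inl ((N6_24 h).mono (by omega))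
  · exact Or.inl ((N6_24 h).mono (by omega))
  · exact Or.inl ((N6_24 h).mono (by omega))
  · exact Or.inl ((N6_24 h).mono (by omega))
  · exact Or.inl ((N6_24 h).mono (by omega))
  · exact Or.inr ⟨68, L6_23 h, by norm_num⟩
  · exact Or.inr ⟨59, L6_22 h, by norm_num⟩
lemma L7_29 (h : TF G) : LB G 7 29 99 := by
  refine step h 99 71 4 (fun d hd hn => ?_) (by intro e; push_cast; omega)
  interval_cases d
  · exact Or.inl ((N6_24 h).mono (by omega))
  · exact Or.inl ((N6_24 h).mono (by omega))
  · exact Or.inl ((N6_24 h).mono (by omega))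
  · exact Or.inl ((N6_24 h).mono (by omega))
  · exact Or.inl ((N6_24 h).mono (by omega))
  · exact Or.inr ⟨68, L6_23 h, by norm_num⟩
  · exact Or.inr ⟨59, L6_22 h, by norm_num⟩
  · exact Or.inr ⟨50, L6_21 h, by norm_num⟩
lemma L7_28 (h : TF G) : LB G 7 28 88 := by
  refine step h 88 56 5 (fun d hd hn => ?_) (by intro e; push_cast; omega)
  interval_cases d
  · exact Or.inl ((N6_24 h).mono (by omega))
  · exact Or.inl ((N6_24 h).mono (by omega))
  · exact Or.inl ((N6_24 h).mono (by omega))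
  · exact Or.inl ((N6_24 h).mono (by omega))
  · exact Or.inr ⟨68, L6_23 h, by norm_num⟩
  · exact Or.inr ⟨59, L6_22 h, by norm_num⟩
  · exact Or.inr ⟨50, L6_21 h, by norm_num⟩
  · exact Or.inr ⟨42, L6_20 h, by norm_num⟩

/-- two vertices `u`, `v` at distance more than three, with neighbourhoods `A`, `B` and the rest `H` -/
structure Cfg (G : SimpleGraph V) [DecidableRel G.Adj] (u v : V) (A B H : Finset V) : Prop where
  tf : TF G
  i9 : ind G 9 univ
  i7 : ind G 7 H
  uH : ∀ w ∈ H, ¬ G.Adj u w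
  vH : ∀ w ∈ H, ¬ G.Adj v w
  uA : ∀ w ∈ A, G.Adj u w
  vB : ∀ w ∈ B, G.Adj v w
  vA : ∀ w ∈ A, ¬ G.Adj v w
  uB : ∀ w ∈ B, ¬ G.Adj u w
  uv : ¬ G.Adj u v
  une : u ≠ v
  unH : u ∉ H
  vnH : v ∉ H
  AB : ∀ a ∈ A, ∀ b ∈ B, ¬ G.Adj a b
  dAH : Disjoint A H
  dBH : Disjoint B H
  Hc : H.card = 29
  ab : A.card + B.card = 9

section
variable {u v : V} {A B H : Finset V}

lemma Cfg.symm (C : Cfg G u v A B H) : Cfg G v u B A H where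
  tf := C.tf
  i9 := C.i9
  i7 := C.i7
  uH := C.vH
  vH := C.uH
  uA := C.vB
  vB := C.uA
  vA := C.uB
  uB := C.vA
  uv := fun h => C.uv h.symm
  une := C.une.symm
  unH := C.vnH
  vnH := C.unH
  AB := fun a ha b hb h => C.AB b hb a ha h.symm
  dAH := C.dBH
  dBH := C.dAH
  Hc := C.Hc
  ab := by have := C.ab; omega

lemma Cfg.Aind (C : Cfg G u v A B H) : Indep G A := fun a ha b hb =>
  C.tf u a b (C.uA a ha) (C.uA b hb)

lemma Cfg.vnA (C : Cfg G u v A B H) : v ∉ A := fun h => C.uv (C.uA v h)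

lemma Cfg.dAB (C : Cfg G u v A B H) : Disjoint A B := by
  rw [disjoint_left]; intro x hx hy; exact C.vA x hx (C.vB x hy)

lemma Cfg.c9 (C : Cfg G u v A B H) {I : Finset V} (hI : Indep G I) : I.card ≤ 9 :=
  C.i9 I (subset_univ _) hI

lemma Cfg.i8 (C : Cfg G u v A B H) : ind G 8 (H ∪ A) := by
  intro I hI hi
  have h1 : v ∉ I := fun h => by
    rcases mem_union.1 (hI h) with h | h
    · exact C.vnH h
    · exact C.vnA h
  have := C.c9 (indep_insert (v := v) hi fun w hw => by
    rcases mem_union.1 (hI hw) with h | h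
    · exact C.vH w h
    · exact C.vA w h)
  rw [card_insert_of_notMem h1] at this
  omega

lemma Cfg.F1 (C : Cfg G u v A B H) (w : V) : dg G H w ≤ 7 := dg_le C.tf C.i7 w

lemma Cfg.F2 (C : Cfg G u v A B H) (w : V) : dg G H w + dg G A w ≤ 8 := by
  rw [← dg_union C.dAH.symm]; exact dg_le C.tf C.i8 w

lemma Cfg.F3 (C : Cfg G u v A B H) (w : V) : dg G H w + dg G A w + dg G B w ≤ 9 := by
  rw [← dg_union C.dAH.symm, ← dg_union]
  · exact dg_le C.tf (ind_mono (subset_univ _) C.i9) w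
  · rw [disjoint_union_left]; exact ⟨C.dBH.symm, C.dAB⟩

lemma Cfg.F0 (C : Cfg G u v A B H) {w : V} (hw : w ∈ H) : 1 ≤ dg G A w + dg G B w := by
  by_contra hc
  have hA : dg G A w = 0 := by omega
  have hB : dg G B w = 0 := by omega
  have hi : Indep G (A ∪ B) := indep_union C.Aind C.symm.Aind C.AB
  have := C.c9 (indep_insert (v := w) hi fun x hx => by
    rcases mem_union.1 hx with h | h
    · exact dg_eq_zero hA h
    · exact dg_eq_zero hB h)
  rw [card_insert_of_notMem, card_union_of_disjoint C.dAB] at this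
  · have := C.ab; omega
  · intro h; rcases mem_union.1 h with h | h
    · exact disjoint_left.1 C.dAH h hw
    · exact disjoint_left.1 C.dBH h hw

lemma Cfg.F4 (C : Cfg G u v A B H) {x : V} (hx : x ∈ A) :
    dg G (H.filter (fun w => dg G A w = 1)) x + A.card ≤ 9 := by
  have i1 : Indep G (nb G (H.filter (fun w => dg G A w = 1)) x ∪ A.erase x) := by
    apply indep_union (indep_nb C.tf _ _)
    · intro a ha b hb; exact C.Aind a (mem_of_mem_erase ha) b (mem_of_mem_erase hb)
    · intro a ha b hb hab
      rw [mem_nb, mem_filter] at ha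
      rw [mem_erase] at hb
      exact hb.1 (dg_le_one ha.1.2.le hb.2 hx hab ha.2.symm)
  have hs : nb G (H.filter (fun w => dg G A w = 1)) x ∪ A.erase x ⊆ H ∪ A := by
    intro y hy
    rcases mem_union.1 hy with h | h
    · rw [mem_nb, mem_filter] at h; exact mem_union_left _ h.1.1
    · exact mem_union_right _ (mem_of_mem_erase h)
  have := C.i8 _ hs i1
  rw [card_union_of_disjoint, card_erase_of_mem hx] at this
  · have h1 := card_pos.2 ⟨x, hx⟩
    change dg G (H.filter (fun w => dg G A w = 1)) x + (A.card - 1) ≤ 8 at this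
    omega
  · rw [disjoint_left]; intro y hy hy'
    rw [mem_nb, mem_filter] at hy
    exact disjoint_left.1 C.dAH (mem_of_mem_erase hy') hy.1.1

lemma Cfg.F5 (C : Cfg G u v A B H) {y : V} (hy : y ∈ B) :
    dg G (H.filter (fun w => dg G A w = 0 ∧ dg G B w = 1)) y ≤ 1 := by
  obtain ⟨J, hJ⟩ : ∃ J, J = nb G (H.filter (fun w => dg G A w = 0 ∧ dg G B w = 1)) y := ⟨_, rfl⟩
  have mJ : ∀ w ∈ J, w ∈ H ∧ dg G A w = 0 ∧ dg G B w = 1 ∧ G.Adj y w := by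
    intro w hw; rw [hJ, mem_nb, mem_filter] at hw; tauto
  have i1 : Indep G (J ∪ B.erase y) := by
    apply indep_union
    · rw [hJ]; exact indep_nb C.tf _ _
    · intro a ha b hb; exact C.symm.Aind a (mem_of_mem_erase ha) b (mem_of_mem_erase hb)
    · intro a ha b hb hab
      rw [mem_erase] at hb
      obtain ⟨-, -, a1, a2⟩ := mJ a ha
      exact hb.1 (dg_le_one a1.le hb.2 hy hab a2.symm)
  have i2 : Indep G (A ∪ (J ∪ B.erase y)) := by
    apply indep_union C.Aind i1
    intro a ha b hb hab
    rcases mem_union.1 hb with hb | hb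
    · exact dg_eq_zero (mJ b hb).2.1 ha hab.symm
    · exact C.AB a ha b (mem_of_mem_erase hb) hab
  have := C.c9 i2
  rw [card_union_of_disjoint, card_union_of_disjoint, card_erase_of_mem hy] at this
  · have h1 := card_pos.2 ⟨y, hy⟩
    have h2 := C.ab
    change (nb G (H.filter (fun w => dg G A w = 0 ∧ dg G B w = 1)) y).card ≤ 1
    rw [← hJ]
    omega
  · rw [disjoint_left]; intro x hx hx'
    exact disjoint_left.1 C.dBH (mem_of_mem_erase hx') (mJ x hx).1
  · rw [disjoint_left]; intro x hx hx'
    rcases mem_union.1 hx' with h | h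
    · exact disjoint_left.1 C.dAH hx (mJ x h).1
    · exact disjoint_left.1 C.dAB hx (mem_of_mem_erase h)

lemma Cfg.D198 (C : Cfg G u v A B H) : 198 ≤ DD G H := L7_29 C.tf H C.Hc C.i7

lemma Cfg.H1 (C : Cfg G u v A B H) : (H.filter (fun w => dg G A w = 1)).card =
    ∑ x ∈ A, dg G (H.filter (fun w => dg G A w = 1)) x := by
  rw [dg_swap, card_eq_sum_ones]
  exact (sum_congr rfl fun w hw => (mem_filter.1 hw).2).symm

lemma Cfg.H1le (C : Cfg G u v A B H) : (H.filter (fun w => dg G A w = 1)).card ≤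
    A.card * B.card := by
  rw [C.H1, ← smul_eq_mul, ← sum_const]
  exact sum_le_sum fun x hx => by have := C.F4 hx; have := C.ab; omega

lemma Cfg.H01le (C : Cfg G u v A B H) :
    (H.filter (fun w => dg G A w = 0 ∧ dg G B w = 1)).card ≤ B.card := by
  have : (H.filter (fun w => dg G A w = 0 ∧ dg G B w = 1)).card =
      ∑ x ∈ B, dg G (H.filter (fun w => dg G A w = 0 ∧ dg G B w = 1)) x := by
    rw [dg_swap, card_eq_sum_ones]
    exact (sum_congr rfl fun w hw => (mem_filter.1 hw).2.2).symm
  rw [this, card_eq_sum_ones]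
  exact sum_le_sum fun x hx => C.F5 hx

/-- deficiency sum -/
lemma Cfg.sum7 (C : Cfg G u v A B H) : ∑ w ∈ H, (7 - dg G H w) + DD G H = 203 := by
  unfold DD; rw [← sum_add_distrib, sum_congr rfl (g := fun _ => 7)]
  · simp [C.Hc]
  · intro w _; have := C.F1 w; omega

lemma Cfg.cover (C : Cfg G u v A B H) :
    29 ≤ (H.filter (fun w => dg G A w = 1)).card +
      (H.filter (fun w => dg G A w = 0 ∧ dg G B w = 1)).card +
      (H.filter (fun w => dg G H w ≤ 6)).card := by
  rw [← C.Hc, card_eq_sum_ones]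
  simp only [card_filter, ← sum_add_distrib]
  apply sum_le_sum
  intro w hw
  have h1 := C.F0 hw
  have h2 := C.F2 w
  have h3 := C.symm.F2 w
  split_ifs <;> omega

lemma Cfg.Xle (C : Cfg G u v A B H) :
    (H.filter (fun w => dg G H w ≤ 6)).card ≤ ∑ w ∈ H, (7 - dg G H w) := by
  rw [card_filter]
  apply sum_le_sum
  intro w hw
  split_ifs <;> omega

lemma Cfg.ge24 (C : Cfg G u v A B H) : 24 ≤ A.card * B.card + B.card := by
  have := C.cover
  have := C.Xle
  have := C.sum7
  have := C.D198
  have := C.H1le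
  have := C.H01le
  omega

lemma Cfg.sizes (C : Cfg G u v A B H) : (A.card = 5 ∧ B.card = 4) ∨ (A.card = 4 ∧ B.card = 5) := by
  have h1 := C.ge24
  have h2 := C.symm.ge24
  have h3 := C.ab
  generalize A.card = a at *
  generalize B.card = b at *
  have h4 : a ≤ 9 := by omega
  have hb' : b = 9 - a := by omega
  subst hb'
  interval_cases a <;> omega
end

section
variable {u v : V} {A B H : Finset V}

lemma Cfg.tight (C : Cfg G u v A B H) (hA : A.card = 5) (hB : B.card = 4) :
    DD G H = 198 ∧ (H.filter (fun w => dg G A w = 1)).card = 20 ∧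
    (H.filter (fun w => dg G H w ≤ 6)).card = 5 ∧
    (∀ x ∈ A, dg G (H.filter (fun w => dg G A w = 1)) x = 4) ∧
    (∀ w ∈ H, (dg G H w = 7 ∧ (dg G A w = 1 ∨ (dg G A w = 0 ∧ dg G B w = 1))) ∨
      (dg G H w = 6 ∧ (dg G A w = 2 ∨ (dg G A w = 0 ∧ 2 ≤ dg G B w)))) := by
  have h1 := C.cover
  have h2 := C.Xle
  have h3 := C.sum7
  have h4 := C.D198
  have h5 := C.H1le
  have h6 := C.H01le
  rw [hA, hB] at h5
  rw [hB] at h6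
  have hx5 : (H.filter (fun w => dg G H w ≤ 6)).card = 5 := by omega
  refine ⟨by omega, by omega, hx5, ?_, ?_⟩
  · intro x hx
    by_contra hne
    have : ∑ x ∈ A, dg G (H.filter (fun w => dg G A w = 1)) x < ∑ x ∈ A, 4 :=
      sum_lt_sum (fun x hx => by have := C.F4 hx; omega) ⟨x, hx, by have := C.F4 hx; omega⟩
    rw [← C.H1, sum_const, hA] at this
    norm_num at this
    omega
  · have e1 : (H.filter (fun w => dg G H w ≤ 6)).card = ∑ w ∈ H, (7 - dg G H w) := by omega
    rw [card_filter] at e1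
    have e2 := (sum_eq_sum_iff_of_le (fun w hw => by split_ifs <;> omega)).1 e1
    have e3 : (H.filter (fun w => dg G A w = 1)).card +
      (H.filter (fun w => dg G A w = 0 ∧ dg G B w = 1)).card +
      (H.filter (fun w => dg G H w ≤ 6)).card = H.card := by rw [C.Hc]; omega
    rw [card_eq_sum_ones H] at e3
    simp only [card_filter, ← sum_add_distrib] at e3
    have e4 := (sum_eq_sum_iff_of_le (fun w hw => by
      have h1 := C.F0 hw
      have h2 := C.F2 w
      have h3 := C.symm.F2 w
      split_ifs <;> omega)).1 e3.symm
    intro w hw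
    have a1 := e2 w hw
    have a2 := e4 w hw
    have a3 := C.F0 hw
    have a4 := C.F2 w
    have a5 := C.F1 w
    split_ifs at a1 a2 <;> omega

lemma Cfg.nA (C : Cfg G u v A B H) (hA : A.card = 5) (hB : B.card = 4) :
    ∀ w ∈ H, dg G H w = 6 → dg G A w = 2 := by
  obtain ⟨hD, hH1, hX, hx4, hw⟩ := C.tight hA hB
  obtain ⟨n, hn⟩ : ∃ n, n = (H.filter (fun w => dg G A w = 2)).card := ⟨_, rfl⟩
  have hsub : H.filter (fun w => dg G A w = 2) ⊆ H.filter (fun w => dg G H w ≤ 6) := by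
    intro w hw'
    rw [mem_filter] at hw' ⊢
    have := hw w hw'.1
    exact ⟨hw'.1, by omega⟩
  have hn5 : n ≤ 5 := by rw [hn, ← hX]; exact card_le_card hsub
  have heA : ∑ w ∈ H, dg G A w = 20 + 2 * n := by
    rw [hn, ← hH1, card_filter, card_filter, mul_sum, ← sum_add_distrib]
    apply sum_congr rfl
    intro w hw'
    have := hw w hw'
    split_ifs <;> omega
  have hDT : DD G (H ∪ A) = 238 + 4 * n := by
    rw [DD_union C.dAH.symm, DD_indep C.Aind, hD, heA]; ring
  have hcT : (H ∪ A).card = 34 := by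
    rw [card_union_of_disjoint C.dAH.symm, C.Hc, hA]
  have key : ∀ x ∈ A, (dg G H x = 5 → 5 ≤ n) ∧ 5 ≤ dg G H x := by
    intro x hx
    have hxT : x ∈ H ∪ A := mem_union_right _ hx
    have a0 : dg G A x = 0 := dg_zero (C.Aind x hx)
    have a1 : dg G (H ∪ A) x = dg G H x := by rw [dg_union C.dAH.symm, a0]; rfl
    have a2 : Z G (H ∪ A) x = 8 * dg G H x := by
      unfold Z
      rw [sum_congr rfl (g := fun _ => 8)]
      · rw [sum_const, smul_eq_mul, mul_comm, ← a1]; rfl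
      · intro w hwn
        rw [mem_nb, mem_union] at hwn
        have hwH : w ∈ H := by
          rcases hwn.1 with h | h
          · exact h
          · exact absurd hwn.2 (C.Aind x hx w h)
        rw [dg_union C.dAH.symm]
        have b1 := one_le_dg (G := G) (S := A) (v := w) hx hwn.2.symm
        have b2 := hw w hwH
        omega
    have a3 := DD_rest C.tf hxT
    have a4 := card_rest (G := G) hxT
    have a5 := ind_rest C.i8 hxT
    have a6 : 4 ≤ dg G H x := by
      rw [← hx4 x hx]; exact dg_mono (filter_subset _ _) x
    constructor
    · intro e
      have := L7_28 C.tf _ (by omega) a5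
      omega
    · by_contra hc
      have := L7_29 C.tf _ (by omega) a5
      omega
  have hn5' : n = 5 := by
    by_contra hne
    have : ∑ x ∈ A, 6 ≤ ∑ x ∈ A, dg G H x := sum_le_sum fun x hx => by
      have := key x hx; omega
    rw [← dg_swap, heA, sum_const, hA] at this
    norm_num at this
    omega
  have heq := eq_of_subset_of_card_le hsub (by omega)
  intro w hwH h6
  have : w ∈ H.filter (fun w => dg G H w ≤ 6) := by rw [mem_filter]; exact ⟨hwH, by omega⟩
  rw [← heq, mem_filter] at this
  exact this.2

lemma dg_biUnion {B : Finset V} {Q : V → Finset V}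
    (hQ : (B : Set V).PairwiseDisjoint Q) (w : V) :
    dg G (B.biUnion Q) w = ∑ y ∈ B, dg G (Q y) w := by
  unfold dg nb
  simp only [card_filter]
  exact sum_biUnion hQ

lemma Cfg.false54 (C : Cfg G u v A B H) (hA : A.card = 5) (hB : B.card = 4) : False := by
  obtain ⟨hD, hH1, hX, hx4, hw0⟩ := C.tight hA hB
  have hnA := C.nA hA hB
  have hw : ∀ w ∈ H, dg G B w ≤ 1 ∧ ((dg G H w = 7 ∧ (dg G A w = 1 ∨ (dg G A w = 0 ∧ dg G B w = 1))) ∨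
      (dg G H w = 6 ∧ dg G A w = 2)) := by
    intro w hwH
    have a1 := hw0 w hwH
    have a2 := hnA w hwH
    have a3 := C.F3 w
    omega
  obtain ⟨Q0, hQ0⟩ : ∃ Q, Q = H.filter (fun w => dg G B w = 0) := ⟨_, rfl⟩
  have mQ0 : ∀ w, w ∈ Q0 ↔ w ∈ H ∧ dg G B w = 0 := by intro w; rw [hQ0, mem_filter]
  have hQB : ∀ y ∈ B, dg G H y ≤ 5 := by
    intro y hy
    have h1 := C.symm.F4 hy
    have h2 : dg G H y ≤ dg G (H.filter (fun w => dg G B w = 1)) y := by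
      apply card_le_card
      intro w hwn
      rw [mem_nb] at hwn ⊢
      rw [mem_filter]
      have b1 := one_le_dg (G := G) (S := B) (v := w) hy hwn.2.symm
      have b2 := (hw w hwn.1).1
      exact ⟨⟨hwn.1, by omega⟩, hwn.2⟩
    omega
  obtain ⟨e, he⟩ : ∃ e, e = ∑ y ∈ B, dg G H y := ⟨_, rfl⟩
  have he20 : e ≤ 20 := by
    rw [he]
    calc _ ≤ ∑ y ∈ B, 5 := sum_le_sum hQB
      _ = 20 := by simp [hB]
  have hz : Q0.card + e = 29 := by
    rw [he, ← dg_swap, hQ0, card_filter, ← sum_add_distrib, ← C.Hc, card_eq_sum_ones]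
    apply sum_congr rfl
    intro w hwH
    have := (hw w hwH).1
    split_ifs <;> omega
  -- exceptional vertices inside and outside of Q0
  obtain ⟨ξ, hξ⟩ : ∃ ξ, ξ = (H.filter (fun w => dg G H w ≤ 6 ∧ dg G B w = 1)).card := ⟨_, rfl⟩
  have hξ1 : Q0.card + ξ ≤ 10 := by
    have h01 := C.symm.H01le
    rw [hA] at h01
    have : Q0.card + ξ ≤ (H.filter (fun w => dg G B w = 0 ∧ dg G A w = 1)).card +
        (H.filter (fun w => dg G H w ≤ 6)).card := by
      rw [hQ0, hξ]
      simp only [card_filter, ← sum_add_distrib]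
      apply sum_le_sum
      intro w hwH
      have := hw w hwH
      split_ifs <;> omega
    omega
  have hBind := C.symm.Aind
  have hcT : (H ∪ B).card = 33 := by
    rw [card_union_of_disjoint C.dBH.symm, C.Hc, hB]
  have hDT : DD G (H ∪ B) = 198 + 2 * e := by
    rw [DD_union C.dBH.symm, DD_indep hBind, hD, dg_swap, ← he]
  have disjQ : ∀ y ∈ B, ∀ y' ∈ B, y ≠ y' → ∀ w ∈ nb G H y, w ∉ nb G H y' := by
    intro y hy y' hy' hne w h1 h2
    rw [mem_nb] at h1 h2
    exact hne (dg_le_one (hw w h1.1).1 hy hy' h1.2.symm h2.2.symm)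
  have nbT : ∀ y ∈ B, nb G (H ∪ B) y = nb G H y := by
    intro y hy
    ext w
    simp only [mem_nb, mem_union]
    constructor
    · rintro ⟨h | h, a⟩
      · exact ⟨h, a⟩
      · exact absurd a (hBind y hy w h)
    · rintro ⟨h, a⟩; exact ⟨Or.inl h, a⟩
  have dT : ∀ y ∈ B, ∀ w ∈ nb G H y, dg G (H ∪ B) w = dg G H w + 1 := by
    intro y hy w hwn
    rw [mem_nb] at hwn
    rw [dg_union C.dBH.symm]
    have b1 := one_le_dg (G := G) (S := B) (v := w) hy hwn.2.symm
    have b2 := (hw w hwn.1).1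
    omega
  have pair : ∀ y ∈ B, ∀ y' ∈ B, y ≠ y' → 10 ≤ ∑ w ∈ nb G H y', dg G (nb G H y) w := by
    intro y hy y' hy' hne
    have hyT : y ∈ H ∪ B := mem_union_right _ hy
    obtain ⟨W, hW⟩ : ∃ W, W = rest G (H ∪ B) y := ⟨_, rfl⟩
    have hy'W : y' ∈ W := by
      rw [hW, mem_rest]; exact ⟨mem_union_right _ hy', hne.symm, hBind y hy y' hy'⟩
    have a1 := DD_rest C.tf hyT
    have a2 := card_rest (G := G) hyT
    have a3 := ind_rest C.symm.i8 hyT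
    rw [← hW] at a1 a2 a3
    have b1 := DD_rest C.tf hy'W
    have b2 := card_rest (G := G) hy'W
    have b3 := ind_rest a3 hy'W
    have nbW : nb G W y' = nb G H y' := by
      rw [← nbT y' hy']
      ext w
      rw [mem_nb, mem_nb, hW, mem_rest]
      constructor
      · rintro ⟨⟨h1, -, -⟩, h2⟩; exact ⟨h1, h2⟩
      · rintro ⟨h1, h2⟩
        refine ⟨⟨h1, ?_, ?_⟩, h2⟩
        · rintro rfl; exact hBind y' hy' w hy h2
        · intro h3
          have m1 : w ∈ nb G (H ∪ B) y' := mem_nb.2 ⟨h1, h2⟩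
          have m2 : w ∈ nb G (H ∪ B) y := mem_nb.2 ⟨h1, h3⟩
          rw [nbT _ hy] at m2
          rw [nbT _ hy'] at m1
          exact disjQ y hy y' hy' hne w m2 m1
    have c1 : dg G (H ∪ B) y = dg G H y := by unfold dg; rw [nbT y hy]
    have c2 : dg G W y' = dg G H y' := by unfold dg; rw [nbW]
    have z1 : Z G (H ∪ B) y = ∑ w ∈ nb G H y, (dg G H w + 1) := by
      unfold Z; rw [nbT y hy]; exact sum_congr rfl (dT y hy)
    have z2 : Z G W y' + ∑ w ∈ nb G H y', dg G (nb G H y) w = ∑ w ∈ nb G H y', (dg G H w + 1) := by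
      unfold Z; rw [nbW, ← sum_add_distrib]
      apply sum_congr rfl
      intro w hwn
      have hwW : w ∈ rest G (H ∪ B) y := by
        rw [← nbW] at hwn; rw [← hW]; exact (mem_nb.1 hwn).1
      have := dg_rest hyT hwW
      rw [dT y' hy' w hwn, nbT y hy, ← hW] at this
      omega
    have s1 : 8 * (dg G H y + dg G H y') ≤
        ∑ w ∈ nb G H y, (dg G H w + 1) + ∑ w ∈ nb G H y', (dg G H w + 1) + ξ := by
      have hdj : Disjoint (nb G H y) (nb G H y') := disjoint_left.2 (disjQ y hy y' hy' hne)
      rw [← sum_union hdj]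
      have t1 : dg G H y + dg G H y' = (nb G H y ∪ nb G H y').card := by
        rw [card_union_of_disjoint hdj]; rfl
      have t2 : ((nb G H y ∪ nb G H y').filter (fun w => dg G H w ≤ 6)).card ≤ ξ := by
        rw [hξ]
        apply card_le_card
        intro w hwn
        simp only [mem_filter, mem_union, mem_nb] at hwn ⊢
        have b : w ∈ H ∧ 1 ≤ dg G B w := by
          rcases hwn.1 with h | h
          · exact ⟨h.1, one_le_dg hy h.2.symm⟩
          · exact ⟨h.1, one_le_dg hy' h.2.symm⟩
        have := (hw w b.1).1
        exact ⟨b.1, hwn.2, by omega⟩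
      have t3 : 8 * (nb G H y ∪ nb G H y').card ≤ ∑ w ∈ nb G H y ∪ nb G H y', (dg G H w + 1) +
          ((nb G H y ∪ nb G H y').filter (fun w => dg G H w ≤ 6)).card := by
        rw [card_filter, ← sum_add_distrib, mul_comm, ← smul_eq_mul, ← sum_const]
        apply sum_le_sum
        intro w hwn
        simp only [mem_union, mem_nb] at hwn
        have hwH : w ∈ H := by tauto
        have := (hw w hwH).2
        split_ifs <;> omega
      rw [t1]; omega
    have q1 := hQB y hy
    have q2 := hQB y' hy'
    have q3 : 9 ≤ dg G H y + dg G H y' := by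
      have hs : ({y, y'} : Finset V) ⊆ B := by
        intro x hx; simp only [mem_insert, mem_singleton] at hx
        rcases hx with rfl | rfl <;> assumption
      have h1 := sum_sdiff (f := fun y => dg G H y) hs
      rw [sum_pair hne] at h1
      have h2 : ∑ x ∈ B \ {y, y'}, dg G H x ≤ ∑ x ∈ B \ {y, y'}, 5 :=
        sum_le_sum fun x hx => hQB x (mem_sdiff.1 hx).1
      rw [sum_const, card_sdiff_of_subset hs, hB, card_pair hne] at h2
      norm_num at h2
      omega
    have q4 : dg G H y + dg G H y' = 9 ∨ dg G H y + dg G H y' = 10 := by omega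
    rcases q4 with q4 | q4
    · have := L6_22 C.tf _ (by omega) b3
      omega
    · have := L6_21 C.tf _ (by omega) b3
      omega
  -- the union of the Q y
  have pd : (B : Set V).PairwiseDisjoint (fun y => nb G H y) := by
    intro y hy y' hy' hne
    exact disjoint_left.2 (disjQ y hy y' hy' hne)
  obtain ⟨U, hU⟩ : ∃ U, U = B.biUnion (fun y => nb G H y) := ⟨_, rfl⟩
  have hDU : 120 ≤ DD G U := by
    unfold DD
    rw [hU, sum_biUnion pd]
    have : ∑ y ∈ B, 30 ≤ ∑ x ∈ B, ∑ i ∈ nb G H x, dg G (B.biUnion fun y ↦ nb G H y) i := by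
      apply sum_le_sum
      intro y hy
      rw [sum_congr rfl (fun w _ => dg_biUnion pd w), sum_comm]
      calc 30 = ∑ y' ∈ B.erase y, 10 := by simp [card_erase_of_mem hy, hB]
        _ ≤ ∑ y' ∈ B.erase y, ∑ w ∈ nb G H y, dg G (nb G H y') w :=
            sum_le_sum fun y' hy' => pair y' (mem_of_mem_erase hy') y hy (ne_of_mem_erase hy')
        _ ≤ _ := sum_le_sum_of_subset (erase_subset _ _)
    rw [sum_const, hB] at this
    exact this
  have hUQ : Disjoint Q0 U := by
    rw [disjoint_left]; intro w h1 h2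
    rw [hU, mem_biUnion] at h2
    obtain ⟨y, hy, h2⟩ := h2
    exact dg_eq_zero ((mQ0 w).1 h1).2 hy (mem_nb.1 h2).2.symm
  have hHU : H = Q0 ∪ U := by
    ext w
    rw [mem_union, mQ0, hU, mem_biUnion]
    constructor
    · intro hwH
      by_cases h0 : dg G B w = 0
      · exact Or.inl ⟨hwH, h0⟩
      · obtain ⟨y, hy, a⟩ := dg_pos (G := G) (S := B) (v := w) (by omega)
        exact Or.inr ⟨y, hy, mem_nb.2 ⟨hwH, a.symm⟩⟩
    · rintro (h | ⟨y, hy, h⟩)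
      · exact h.1
      · exact (mem_nb.1 h).1
  have f1 : DD G H = DD G Q0 + DD G U + 2 * ∑ a ∈ Q0, dg G U a := by
    conv_lhs => rw [hHU]
    exact DD_union hUQ
  have f2 : ∑ a ∈ Q0, dg G H a = DD G Q0 + ∑ a ∈ Q0, dg G U a := by
    unfold DD
    rw [← sum_add_distrib]
    apply sum_congr rfl
    intro w _
    conv_lhs => rw [hHU]
    exact dg_union hUQ w
  have f3 : 7 * Q0.card ≤ ∑ a ∈ Q0, dg G H a + 5 := by
    have g1 : (Q0.filter (fun w => dg G H w ≤ 6)).card ≤ 5 := by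
      rw [← hX, hQ0]; exact card_le_card (filter_subset_filter _ (filter_subset _ _))
    have g2 : 7 * Q0.card ≤ ∑ a ∈ Q0, dg G H a + (Q0.filter (fun w => dg G H w ≤ 6)).card := by
      rw [card_filter, ← sum_add_distrib, mul_comm, ← smul_eq_mul, ← sum_const]
      apply sum_le_sum
      intro w hwn
      have := (hw w ((mQ0 w).1 hwn).1).2
      split_ifs <;> omega
    omega
  have i4 : ind G 4 Q0 := by
    intro I hI hi
    have i1 : Indep G (I ∪ B) := by
      apply indep_union hi hBind
      intro a ha b hb
      exact dg_eq_zero ((mQ0 a).1 (hI ha)).2 hb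
    have := C.symm.i8 (I ∪ B) (union_subset_union (fun x hx => ((mQ0 x).1 (hI hx)).1) subset_rfl) i1
    rw [card_union_of_disjoint, hB] at this
    · omega
    · rw [disjoint_left]; intro x hx hx'
      exact disjoint_left.1 C.dBH hx' ((mQ0 x).1 (hI hx)).1
  have f4 : DD G Q0 ≤ 4 * Q0.card := by
    rw [mul_comm, ← smul_eq_mul, ← sum_const]
    exact sum_le_sum fun w _ => dg_le C.tf i4 w
  omega

lemma Cfg.elim (C : Cfg G u v A B H) : False := by
  rcases C.sizes with h | h
  · exact C.false54 h.1 h.2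
  · exact C.symm.false54 h.2 h.1
end

lemma dist_three (htf : TF G) (i9 : ind G 9 univ) (hc : Fintype.card V = 40) (u v : V) (hne : u ≠ v)
    (h1 : ¬ G.Adj u v) (h2 : ∀ w, G.Adj u w → ¬ G.Adj w v)
    (h3 : ∀ w x, G.Adj u w → G.Adj w x → ¬ G.Adj x v) : False := by
  have hv : v ∈ rest G univ u := mem_rest.2 ⟨mem_univ _, hne.symm, h1⟩
  have hi := ind_rest (ind_rest i9 (mem_univ u)) hv
  have c1 := card_rest (G := G) (mem_univ u)
  have c2 := card_rest (G := G) hv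
  rw [card_univ, hc] at c1
  have hAB : ∀ a ∈ nb G univ u, ∀ b ∈ nb G univ v, ¬ G.Adj a b := by
    intro a ha b hb hab
    exact h3 a b (mem_nb.1 ha).2 hab (mem_nb.1 hb).2.symm
  have hd : Disjoint (nb G univ u) (nb G univ v) := by
    rw [disjoint_left]; intro x hx hy
    exact h2 x (mem_nb.1 hx).2 (mem_nb.1 hy).2.symm
  have h9 : (nb G univ u).card + (nb G univ v).card ≤ 9 := by
    rw [← card_union_of_disjoint hd]
    exact i9 _ (subset_univ _) (indep_union (indep_nb htf _ _) (indep_nb htf _ _) hAB)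
  have hB : nb G (rest G univ u) v = nb G univ v := by
    ext w
    simp only [mem_nb, mem_rest, mem_univ, true_and]
    constructor
    · exact fun h => h.2
    · intro h
      refine ⟨⟨?_, fun a => h2 w a h.symm⟩, h⟩
      rintro rfl; exact h1 h.symm
  have c3 : dg G (rest G univ u) v = (nb G univ v).card := by unfold dg; rw [hB]
  have c4 : dg G univ u = (nb G univ u).card := rfl
  have c5 : (rest G (rest G univ u) v).card < 30 := by
    by_contra hcon
    exact N7_30 htf _ (by omega) hi
  have C : Cfg G u v (nb G univ u) (nb G univ v) (rest G (rest G univ u) v) :=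
    { tf := htf
      i9 := i9
      i7 := hi
      uH := fun w hw => (mem_rest.1 (mem_rest.1 hw).1).2.2
      vH := fun w hw => (mem_rest.1 hw).2.2
      uA := fun w hw => (mem_nb.1 hw).2
      vB := fun w hw => (mem_nb.1 hw).2
      vA := fun w hw a => h2 w (mem_nb.1 hw).2 a.symm
      uB := fun w hw a => h2 w a (mem_nb.1 hw).2.symm
      uv := h1
      une := hne
      unH := fun h => (mem_rest.1 (mem_rest.1 h).1).2.1 rfl
      vnH := fun h => (mem_rest.1 h).2.1 rfl
      AB := hAB
      dAH := by
        rw [disjoint_left]; intro x hx hy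
        exact (mem_rest.1 (mem_rest.1 hy).1).2.2 (mem_nb.1 hx).2
      dBH := by
        rw [disjoint_left]; intro x hx hy
        exact (mem_rest.1 hy).2.2 (mem_nb.1 hx).2
      Hc := by omega
      ab := by omega }
  exact C.elim

end R310

/-- The diameter of a (3,10,40)-graph is 2 or 3. -/
theorem stmt_13 (Ω : SimpleGraph (Fin 40)) [DecidableRel Ω.Adj]
    (h3 : Ω.CliqueFree 3) (h10 : Ωᶜ.CliqueFree 10) :
    2 ≤ Ω.diam ∧ Ω.diam ≤ 3 := by
  have tf : R310.TF Ω := by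
    intro a b c hab hac hbc
    exact h3 {a, b, c} (SimpleGraph.is3Clique_triple_iff.2 ⟨hab, hac, hbc⟩)
  have i9 : R310.ind Ω 9 Finset.univ := by
    intro I _ hI
    by_contra hc
    obtain ⟨J, hJ, hJc⟩ := Finset.exists_subset_card_eq (show 10 ≤ I.card by omega)
    refine h10 J ⟨?_, hJc⟩
    intro a ha b hb hne
    rw [SimpleGraph.compl_adj]
    exact ⟨hne, hI a (hJ ha) b (hJ hb)⟩
  have key : ∀ u v, Ω.edist u v ≤ 3 := by
    intro u v
    by_cases hne : u = v
    · subst hne; simp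
    by_cases h1 : Ω.Adj u v
    · exact (SimpleGraph.Walk.edist_le (SimpleGraph.Walk.cons h1 .nil)).trans (by norm_num)
    by_cases h2 : ∃ w, Ω.Adj u w ∧ Ω.Adj w v
    · obtain ⟨w, a, b⟩ := h2
      exact (SimpleGraph.Walk.edist_le (SimpleGraph.Walk.cons a (.cons b .nil))).trans (by norm_num)
    by_cases h3 : ∃ w x, Ω.Adj u w ∧ Ω.Adj w x ∧ Ω.Adj x v
    · obtain ⟨w, x, a, b, c⟩ := h3
      exact (SimpleGraph.Walk.edist_le (SimpleGraph.Walk.cons a (.cons b (.cons c .nil)))).trans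
        (by norm_num)
    push Not at h2 h3
    exact (R310.dist_three tf i9 (by simp) u v hne h1 h2 h3).elim
  have hed : Ω.ediam ≤ 3 := SimpleGraph.ediam_le_of_edist_le key
  have htop : Ω.ediam ≠ ⊤ := fun e => by rw [e] at hed; exact absurd hed (by decide)
  constructor
  · obtain ⟨x, y, hne, hna⟩ : ∃ x y, x ≠ y ∧ ¬ Ω.Adj x y := by
      by_contra hc
      push Not at hc
      exact tf 0 1 2 (hc 0 1 (by decide)) (hc 0 2 (by decide)) (hc 1 2 (by decide))
    have hd := SimpleGraph.dist_le_diam htop (u := x) (v := y)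
    have hr : Ω.Reachable x y := by
      apply SimpleGraph.reachable_of_edist_ne_top
      intro e
      have := key x y
      rw [e] at this; exact absurd this (by decide)
    have h0 : Ω.dist x y ≠ 0 := fun e => hne (hr.dist_eq_zero_iff.1 e)
    have h1 : Ω.dist x y ≠ 1 := fun e => hna (SimpleGraph.dist_eq_one_iff_adj.1 e)
    omega
  · unfold SimpleGraph.diam
    exact ENat.toNat_le_of_le_natCast hed
end

section
/- Let Ω be a (3,10,40)-graph with diam(Ω) = 2 and let v be a vertex of Ω with d(v) = 6. Then the neighbourhood N(v) contains at most 2 vertices of degree 6. -/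
theorem aux_indep (Ω : SimpleGraph (Fin 40)) [DecidableRel Ω.Adj]
    (h3 : Ω.CliqueFree 3) (h10 : Ωᶜ.CliqueFree 10) (v w : Fin 40) (S W : Finset (Fin 40))
    (hS : ∀ x ∈ S, Ω.Adj v x) (hW : ∀ x ∈ W, Ω.Adj w x) (hWv : ∀ x ∈ W, ¬ Ω.Adj v x)
    (hSW : ∀ x ∈ S, ∀ y ∈ W, ¬ Ω.Adj x y) : S.card + W.card ≤ 9 := by
  have tri : ∀ a b c, Ω.Adj a b → Ω.Adj a c → ¬ Ω.Adj b c := by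
    intro a b c hab hac hbc
    exact h3 {a, b, c} (SimpleGraph.is3Clique_triple_iff.2 ⟨hab, hac, hbc⟩)
  have hd : Disjoint S W := Finset.disjoint_left.2 fun x hx hx' => hWv x hx' (hS x hx)
  rw [← Finset.card_union_of_disjoint hd]
  by_contra hlt
  have hge : 10 ≤ (S ∪ W).card := by omega
  obtain ⟨U, hU, hUc⟩ := Finset.exists_subset_card_eq hge
  refine h10 U ⟨?_, hUc⟩
  intro x hx y hy hne
  rw [SimpleGraph.compl_adj]
  refine ⟨hne, fun hxy => ?_⟩
  rcases Finset.mem_union.1 (hU hx) with h1 | h1 <;>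
    rcases Finset.mem_union.1 (hU hy) with h2 | h2
  · exact tri _ _ _ (hS _ h1) (hS _ h2) hxy
  · exact hSW _ h1 _ h2 hxy
  · exact hSW _ h2 _ h1 hxy.symm
  · exact tri _ _ _ (hW _ h1) (hW _ h2) hxy

/-- In a (3,10,40)-graph of diameter 2, the neighbourhood of a vertex of
degree 6 contains at most 2 vertices of degree 6. -/
theorem stmt_14 (Ω : SimpleGraph (Fin 40)) [DecidableRel Ω.Adj]
    (h3 : Ω.CliqueFree 3) (h10 : Ωᶜ.CliqueFree 10)
    (hdiam : Ω.diam = 2) (v : Fin 40) (hv : Ω.degree v = 6) :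
    ((Ω.neighborFinset v).filter fun u => Ω.degree u = 6).card ≤ 2 := by
  have hne : Ω.ediam ≠ ⊤ := by
    intro h
    rw [SimpleGraph.diam, h] at hdiam
    simp at hdiam
  have hconn : Ω.Connected := SimpleGraph.connected_of_ediam_ne_top hne
  have hcov : ∀ x, x ≠ v → ¬ Ω.Adj v x → ∃ u, Ω.Adj v u ∧ Ω.Adj u x := by
    intro x hx hnx
    have hle : Ω.dist v x ≤ 2 := hdiam ▸ SimpleGraph.dist_le_diam hne
    obtain ⟨p, hp⟩ := hconn.exists_walk_length_eq_dist v x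
    rw [← hp] at hle
    match p, hle with
    | .nil, _ => exact absurd rfl hx
    | .cons h .nil, _ => exact absurd h hnx
    | .cons h (.cons h' .nil), _ => exact ⟨_, h, h'⟩
    | .cons _ (.cons _ (.cons _ _)), hle => simp at hle
  by_contra hlt
  have hge : 3 ≤ ((Ω.neighborFinset v).filter fun u => Ω.degree u = 6).card := by omega
  obtain ⟨T, hT, hTc⟩ := Finset.exists_subset_card_eq hge
  have hTv : ∀ x ∈ T, Ω.Adj v x := fun x hx => by
    have := hT hx; simp at this; exact this.1
  have hTd : ∀ x ∈ T, Ω.degree x = 6 := fun x hx => by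
    have := hT hx; simp at this; exact this.2
  have hTN : T ⊆ Ω.neighborFinset v := fun x hx => by simpa using hTv x hx
  have hc3 : (Ω.neighborFinset v \ T).card = 3 := by
    rw [Finset.card_sdiff_of_subset hTN, Ω.card_neighborFinset_eq_degree, hv, hTc]
  obtain ⟨a, b, c, hab, hac, hbc, habc⟩ := Finset.card_eq_three.1 hc3
  have hmem : ∀ x, x ∈ ({a, b, c} : Finset (Fin 40)) → Ω.Adj v x ∧ x ∉ T := by
    intro x hx; rw [← habc] at hx; simpa using hx
  obtain ⟨hva, haT⟩ := hmem a (by simp)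
  obtain ⟨hvb, hbT⟩ := hmem b (by simp)
  obtain ⟨hvc, hcT⟩ := hmem c (by simp)
  set B := T.biUnion fun u => (Ω.neighborFinset u).erase v with hB
  have hBc : B.card ≤ 15 := by
    refine (Finset.card_biUnion_le_card_mul T _ 5 ?_).trans (by omega)
    intro u hu
    rw [Finset.card_erase_of_mem (by simpa using (hTv u hu).symm),
      Ω.card_neighborFinset_eq_degree, hTd u hu]
  set H := Finset.univ \ (insert v (Ω.neighborFinset v ∪ B)) with hH
  have hHc : 18 ≤ H.card := by
    have h1 : (Finset.univ : Finset (Fin 40)).card - (insert v (Ω.neighborFinset v ∪ B)).card ≤ H.card :=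
      Finset.le_card_sdiff _ _
    have h2 := Finset.card_insert_le v (Ω.neighborFinset v ∪ B)
    have h4 := Finset.card_union_le (Ω.neighborFinset v) B
    rw [Ω.card_neighborFinset_eq_degree, hv] at h4
    simp only [Finset.card_univ, Fintype.card_fin] at h1
    omega
  have hHm : ∀ x ∈ H, x ≠ v ∧ ¬ Ω.Adj v x ∧ ∀ u ∈ T, ¬ Ω.Adj u x := by
    intro x hx
    simp [hH, hB] at hx
    exact ⟨hx.1, hx.2.1, fun u hu => hx.2.2 u hu hx.1⟩
  have e1 := aux_indep Ω h3 h10 v c T (H.filter fun x => Ω.Adj c x) hTv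
    (by simp) (fun x hx => (hHm x (Finset.mem_filter.1 hx).1).2.1)
    (fun u hu x hx => (hHm x (Finset.mem_filter.1 hx).1).2.2 u hu)
  have e2 := aux_indep Ω h3 h10 v b (insert c T) (H.filter fun x => Ω.Adj b x ∧ ¬ Ω.Adj c x)
    (by simpa using ⟨hvc, hTv⟩)
    (by simp +contextual) (fun x hx => (hHm x (Finset.mem_filter.1 hx).1).2.1)
    (fun u hu x hx => by
      obtain ⟨h1, h2, h4⟩ := Finset.mem_filter.1 hx
      rcases Finset.mem_insert.1 hu with rfl | hu
      · exact h4
      · exact (hHm x h1).2.2 u hu)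
  have e3 := aux_indep Ω h3 h10 v a (insert c T) (H.filter fun x => Ω.Adj a x ∧ ¬ Ω.Adj c x)
    (by simpa using ⟨hvc, hTv⟩)
    (by simp +contextual) (fun x hx => (hHm x (Finset.mem_filter.1 hx).1).2.1)
    (fun u hu x hx => by
      obtain ⟨h1, h2, h4⟩ := Finset.mem_filter.1 hx
      rcases Finset.mem_insert.1 hu with rfl | hu
      · exact h4
      · exact (hHm x h1).2.2 u hu)
  rw [Finset.card_insert_of_notMem hcT] at e2 e3
  have hsub : H ⊆ (H.filter fun x => Ω.Adj c x) ∪ ((H.filter fun x => Ω.Adj b x ∧ ¬ Ω.Adj c x) ∪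
      (H.filter fun x => Ω.Adj a x ∧ ¬ Ω.Adj c x)) := by
    intro x hx
    obtain ⟨h1, h2, h4⟩ := hHm x hx
    obtain ⟨u, hu, hux⟩ := hcov x h1 h2
    have huT : u ∉ T := fun h => h4 u h hux
    have : u ∈ ({a, b, c} : Finset (Fin 40)) := by rw [← habc]; simp [hu, huT]
    simp only [Finset.mem_insert, Finset.mem_singleton] at this
    simp only [Finset.mem_union, Finset.mem_filter]
    rcases this with rfl | rfl | rfl <;> tauto
  have f1 := Finset.card_le_card hsub
  have f2 := Finset.card_union_le (H.filter fun x => Ω.Adj c x)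
    ((H.filter fun x => Ω.Adj b x ∧ ¬ Ω.Adj c x) ∪ (H.filter fun x => Ω.Adj a x ∧ ¬ Ω.Adj c x))
  have f3 := Finset.card_union_le (H.filter fun x => Ω.Adj b x ∧ ¬ Ω.Adj c x)
    (H.filter fun x => Ω.Adj a x ∧ ¬ Ω.Adj c x)
  omega
end

section
/- Let Ω be a (3,10,40)-graph with diam(Ω) = 2. Then the minimum degree of Ω is at least 6, i.e., every vertex of Ω has degree at least 6. -/
theorem common_nbr (Ω : SimpleGraph (Fin 40)) (hdiam : Ω.diam = 2) (v w : Fin 40)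
    (hne : v ≠ w) (hna : ¬ Ω.Adj v w) : ∃ u, Ω.Adj v u ∧ Ω.Adj u w := by
  have ht : Ω.ediam ≠ ⊤ := by
    intro h
    rw [SimpleGraph.diam, h] at hdiam
    simp at hdiam
  have hc : Ω.Connected := SimpleGraph.connected_of_ediam_ne_top ht
  have hd : Ω.dist v w ≤ 2 := hdiam ▸ SimpleGraph.dist_le_diam ht
  obtain ⟨p, hp⟩ := hc.exists_walk_length_eq_dist v w
  rw [← hp] at hd
  match p, hd with
  | .nil, _ => exact absurd rfl hne
  | .cons h .nil, _ => exact absurd h hna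
  | .cons h (.cons h' .nil), _ => exact ⟨_, h, h'⟩
  | .cons h (.cons h' (.cons h'' q)), hd => simp at hd

/-- Every vertex of a (3,10,40)-graph of diameter 2 has degree at least 6. -/
theorem stmt_16 (Ω : SimpleGraph (Fin 40)) [DecidableRel Ω.Adj]
    (h3 : Ω.CliqueFree 3) (h10 : Ωᶜ.CliqueFree 10)
    (hdiam : Ω.diam = 2) :
    ∀ v : Fin 40, 6 ≤ Ω.degree v := by
  intro v
  by_contra hlt
  have tri : ∀ a b c, Ω.Adj a b → Ω.Adj a c → ¬ Ω.Adj b c := by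
    intro a b c hab hac hbc
    exact h3 {a, b, c} (SimpleGraph.is3Clique_triple_iff.2 ⟨hab, hac, hbc⟩)
  have ind : ∀ s : Finset (Fin 40), (∀ a ∈ s, ∀ b ∈ s, ¬ Ω.Adj a b) → s.card ≤ 9 := by
    intro s hs
    by_contra hcard
    obtain ⟨t, hts, htc⟩ := Finset.exists_subset_card_eq (show 10 ≤ s.card by omega)
    refine h10 t ⟨?_, htc⟩
    intro a ha b hb hab
    exact ⟨hab, hs a (hts ha) b (hts hb)⟩
  set N := Ω.neighborFinset v with hN
  have mN : ∀ u, u ∈ N ↔ Ω.Adj v u := by simp [hN]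
  have hNc : N.card = Ω.degree v := rfl
  set W := Finset.univ \ insert v N with hW
  have mW : ∀ w, w ∈ W ↔ w ≠ v ∧ ¬ Ω.Adj v w := by simp [hW, mN]
  have hWc : W.card = 39 - Ω.degree v := by
    rw [hW, Finset.card_sdiff_of_subset (Finset.subset_univ _), Finset.card_insert_of_notMem (by simp [mN]),
      hNc]
    simp
  have key : ∀ w ∈ W, 2 ≤ ∑ u ∈ N, ((if Ω.Adj u w then 1 else 0) +
      (if N.filter (fun x => Ω.Adj x w) = {u} then 1 else 0)) := by
    intro w hw
    rw [mW] at hw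
    obtain ⟨u, hu1, hu2⟩ := common_nbr Ω hdiam v w hw.1.symm hw.2
    rw [Finset.sum_add_distrib, ← Finset.card_filter, ← Finset.card_filter]
    have h1 : 0 < (N.filter (fun x => Ω.Adj x w)).card :=
      Finset.card_pos.2 ⟨u, by simp [mN, hu1, hu2]⟩
    by_cases h2 : (N.filter (fun x => Ω.Adj x w)).card = 1
    · obtain ⟨x, hx⟩ := Finset.card_eq_one.1 h2
      have hxN : x ∈ N := by
        have : x ∈ N.filter (fun x => Ω.Adj x w) := by rw [hx]; simp
        exact (Finset.mem_filter.1 this).1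
      have : 0 < (N.filter (fun u => N.filter (fun x => Ω.Adj x w) = {u})).card :=
        Finset.card_pos.2 ⟨x, Finset.mem_filter.2 ⟨hxN, hx⟩⟩
      omega
    · omega
  have hsum := Finset.sum_le_sum key
  rw [Finset.sum_comm] at hsum
  have ub : ∀ u ∈ N, ∑ w ∈ W, ((if Ω.Adj u w then 1 else 0) +
      (if N.filter (fun x => Ω.Adj x w) = {u} then 1 else 0)) ≤ 8 + (10 - Ω.degree v) := by
    intro u hu
    rw [Finset.sum_add_distrib, ← Finset.card_filter, ← Finset.card_filter]
    have huv := (mN u).1 hu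
    refine add_le_add ?_ ?_
    · have := ind (insert v (W.filter (fun w => Ω.Adj u w))) (by
        have hh : ∀ a ∈ insert v (W.filter (fun w => Ω.Adj u w)), Ω.Adj u a := by
          intro a ha
          rcases Finset.mem_insert.1 ha with rfl | ha
          · exact huv.symm
          · exact (Finset.mem_filter.1 ha).2
        intro a ha b hb
        exact tri u a b (hh a ha) (hh b hb))
      rw [Finset.card_insert_of_notMem (by simp [mW])] at this
      omega
    · set P := W.filter (fun w => N.filter (fun x => Ω.Adj x w) = {u}) with hP
      have hPu : ∀ w ∈ P, w ∈ W ∧ ∀ x ∈ N, (Ω.Adj x w ↔ x = u) := by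
        intro w hw
        obtain ⟨h1, h2⟩ := Finset.mem_filter.1 hw
        refine ⟨h1, fun x hx => ?_⟩
        have := Finset.ext_iff.1 h2 x
        simpa [hx] using this
      have hdis : Disjoint P (N.erase u) := by
        rw [Finset.disjoint_left]
        intro a ha hb
        exact ((mW a).1 (hPu a ha).1).2 ((mN a).1 (Finset.mem_of_mem_erase hb))
      have cross : ∀ a ∈ P, ∀ b ∈ N.erase u, ¬ Ω.Adj b a := by
        intro a ha b hb hab
        exact Finset.ne_of_mem_erase hb (((hPu a ha).2 b (Finset.mem_of_mem_erase hb)).1 hab)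
      have := ind (P ∪ N.erase u) (by
        intro a ha b hb
        rcases Finset.mem_union.1 ha with ha | ha <;> rcases Finset.mem_union.1 hb with hb | hb
        · exact tri u a b (((hPu a ha).2 u hu).2 rfl) (((hPu b hb).2 u hu).2 rfl)
        · exact fun h => cross a ha b hb h.symm
        · exact cross b hb a ha
        · exact tri v a b ((mN a).1 (Finset.mem_of_mem_erase ha))
            ((mN b).1 (Finset.mem_of_mem_erase hb)))
      rw [Finset.card_union_of_disjoint hdis, Finset.card_erase_of_mem hu, hNc] at this
      omega
  have hsum2 := hsum.trans (Finset.sum_le_sum ub)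
  simp only [Finset.sum_const, smul_eq_mul, hWc, hNc] at hsum2
  generalize Ω.degree v = d at *
  have : d ≤ 5 := by omega
  clear * - this hsum2
  interval_cases d <;> omega
end

section
/- Let Ω be a (3,10,40)-graph with diam(Ω) = 2. Then the vertex connectivity of Ω is at least 6; that is, for every set S of at most 5 vertices, the graph obtained from Ω by deleting the vertices of S remains connected. -/
open Finset in
lemma aux_indep_s17 (Ω : SimpleGraph (Fin 40)) (h10 : Ωᶜ.CliqueFree 10) (I : Finset (Fin 40))
    (hI : ∀ x ∈ I, ∀ y ∈ I, ¬ Ω.Adj x y) : I.card ≤ 9 := by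
  by_contra h
  obtain ⟨J, hJI, hJ⟩ := Finset.exists_subset_card_eq (show 10 ≤ I.card by omega)
  refine h10 J ⟨?_, hJ⟩
  intro x hx y hy hxy
  exact (SimpleGraph.compl_adj _ _ _).2 ⟨hxy, hI x (hJI hx) y (hJI hy)⟩

lemma aux_tri (Ω : SimpleGraph (Fin 40)) (h3 : Ω.CliqueFree 3) (a b c : Fin 40)
    (h1 : Ω.Adj a b) (h2 : Ω.Adj a c) (h4 : Ω.Adj b c) : False :=
  h3 {a, b, c} (SimpleGraph.is3Clique_triple_iff.2 ⟨h1, h2, h4⟩)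

open Finset in
/-- neighbours of `t` in `B` number at most 8 when `t` has a neighbour outside `B` -/
lemma aux_nb (Ω : SimpleGraph (Fin 40)) [DecidableRel Ω.Adj]
    (h3 : Ω.CliqueFree 3) (h10 : Ωᶜ.CliqueFree 10) (B : Finset (Fin 40)) (a t : Fin 40)
    (ha : a ∉ B) (hat : Ω.Adj a t) : (B.filter (fun b => Ω.Adj b t)).card ≤ 8 := by
  have h := aux_indep_s17 Ω h10 (insert a (B.filter (fun b => Ω.Adj b t))) (by
    intro x hx y hy hxy
    have hx' : Ω.Adj x t := by
      rcases Finset.mem_insert.1 hx with rfl | h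
      · exact hat
      · exact (Finset.mem_filter.1 h).2
    have hy' : Ω.Adj y t := by
      rcases Finset.mem_insert.1 hy with rfl | h
      · exact hat
      · exact (Finset.mem_filter.1 h).2
    exact aux_tri Ω h3 x y t hxy hx' hy')
  rw [Finset.card_insert_of_notMem (by simp [ha])] at h
  omega

open Finset in
lemma aux_cover (Ω : SimpleGraph (Fin 40)) [DecidableRel Ω.Adj]
    (T B : Finset (Fin 40)) (m : ℕ)
    (hc : ∀ b ∈ B, ∃ t ∈ T, Ω.Adj b t)
    (hm : ∀ t ∈ T, (B.filter (fun b => Ω.Adj b t)).card ≤ m) : B.card ≤ T.card * m := by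
  have : B ⊆ T.biUnion (fun t => B.filter (fun b => Ω.Adj b t)) := by
    intro b hb
    obtain ⟨t, ht, h⟩ := hc b hb
    exact Finset.mem_biUnion.2 ⟨t, ht, Finset.mem_filter.2 ⟨hb, h⟩⟩
  exact (Finset.card_le_card this).trans (Finset.card_biUnion_le_card_mul _ _ _ hm)

open Finset in
lemma aux_main (Ω : SimpleGraph (Fin 40)) [DecidableRel Ω.Adj]
    (h3 : Ω.CliqueFree 3) (h10 : Ωᶜ.CliqueFree 10) (S A B : Finset (Fin 40))
    (hS : S.card ≤ 5) (hcard : 35 ≤ A.card + B.card)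
    (hA : A.Nonempty) (hle : A.card ≤ B.card) (hdis : Disjoint A B)
    (hno : ∀ a ∈ A, ∀ b ∈ B, ¬ Ω.Adj a b)
    (hcom : ∀ a ∈ A, ∀ b ∈ B, ∃ s ∈ S, Ω.Adj a s ∧ Ω.Adj b s) : False := by
  have hnB : ∀ a ∈ A, a ∉ B := fun a ha => Finset.disjoint_left.1 hdis ha
  have cov : ∀ a ∈ A, B.card ≤ (S.filter (fun s => Ω.Adj a s)).card * 8 := by
    intro a ha
    apply aux_cover Ω _ _ 8
    · intro b hb
      obtain ⟨s, hs, h1, h2⟩ := hcom a ha b hb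
      exact ⟨s, Finset.mem_filter.2 ⟨hs, h1⟩, h2⟩
    · intro t ht
      exact aux_nb Ω h3 h10 B a t (hnB a ha) (Finset.mem_filter.1 ht).2
  have hAi : ∀ x ∈ A, ∀ y ∈ A, ¬ Ω.Adj x y := by
    intro x hx y hy hxy
    have h1 := cov x hx
    have h2 := cov y hy
    have hd : Disjoint (S.filter (fun s => Ω.Adj x s)) (S.filter (fun s => Ω.Adj y s)) := by
      rw [Finset.disjoint_left]
      intro s hs hs'
      exact aux_tri Ω h3 x y s hxy (Finset.mem_filter.1 hs).2 (Finset.mem_filter.1 hs').2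
    have h4 := Finset.card_union_of_disjoint hd
    have h5 : (S.filter (fun s => Ω.Adj x s) ∪ S.filter (fun s => Ω.Adj y s)).card ≤ S.card :=
      Finset.card_le_card (Finset.union_subset (Finset.filter_subset _ _) (Finset.filter_subset _ _))
    omega
  obtain ⟨a, ha⟩ := hA
  set T := S.filter (fun s => Ω.Adj a s) with hT
  have hT5 : T.card ≤ 5 := (Finset.card_le_card (Finset.filter_subset _ _)).trans hS
  have hTa : ∀ t ∈ T, Ω.Adj a t := fun t ht => (Finset.mem_filter.1 ht).2
  have hcT : ∀ b ∈ B, ∃ t ∈ T, Ω.Adj b t := by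
    intro b hb
    obtain ⟨s, hs, h1, h2⟩ := hcom a ha b hb
    exact ⟨s, Finset.mem_filter.2 ⟨hs, h1⟩, h2⟩
  have hA9 := aux_indep_s17 Ω h10 A hAi
  have hk : B.card ≤ T.card * (9 - A.card) := by
    apply aux_cover Ω _ _ _ hcT
    intro t ht
    have h := aux_indep_s17 Ω h10 (A ∪ B.filter (fun b => Ω.Adj b t)) (by
      intro x hx y hy hxy
      rcases Finset.mem_union.1 hx with hx | hx <;> rcases Finset.mem_union.1 hy with hy | hy
      · exact hAi x hx y hy hxy
      · exact hno x hx y (Finset.mem_filter.1 hy).1 hxy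
      · exact hno y hy x (Finset.mem_filter.1 hx).1 hxy.symm
      · exact aux_tri Ω h3 x y t hxy (Finset.mem_filter.1 hx).2 (Finset.mem_filter.1 hy).2)
    rw [Finset.card_union_of_disjoint
      (Finset.disjoint_of_subset_right (Finset.filter_subset _ _) hdis)] at h
    omega
  have hk2 : B.card ≤ 5 * (9 - A.card) := hk.trans (Nat.mul_le_mul_right _ hT5)
  have hB : 33 ≤ B.card := by omega
  -- private neighbours
  have hP : ∀ t ∈ T, (B.filter (fun b => T.filter (fun s => Ω.Adj b s) = {t})).card + T.card ≤ 10 := by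
    intro t ht
    have hmem : ∀ x ∈ B.filter (fun b => T.filter (fun s => Ω.Adj b s) = {t}),
        Ω.Adj x t ∧ ∀ s ∈ T, Ω.Adj x s → s = t := by
      intro x hx
      have h := (Finset.mem_filter.1 hx).2
      constructor
      · have : t ∈ T.filter (fun s => Ω.Adj x s) := by rw [h]; simp
        exact (Finset.mem_filter.1 this).2
      · intro s hs hxs
        have : s ∈ T.filter (fun s => Ω.Adj x s) := Finset.mem_filter.2 ⟨hs, hxs⟩
        rw [h] at this
        simpa using this
    have hd : Disjoint (B.filter (fun b => T.filter (fun s => Ω.Adj b s) = {t})) (T.erase t) := by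
      rw [Finset.disjoint_left]
      intro x hx hx'
      exact hno a ha x (Finset.mem_filter.1 hx).1 (hTa x (Finset.mem_of_mem_erase hx'))
    have h := aux_indep_s17 Ω h10 (B.filter (fun b => T.filter (fun s => Ω.Adj b s) = {t}) ∪ T.erase t) (by
      intro x hx y hy hxy
      rcases Finset.mem_union.1 hx with hx | hx <;> rcases Finset.mem_union.1 hy with hy | hy
      · exact aux_tri Ω h3 x y t hxy (hmem x hx).1 (hmem y hy).1
      · exact Finset.ne_of_mem_erase hy ((hmem x hx).2 y (Finset.mem_of_mem_erase hy) hxy)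
      · exact Finset.ne_of_mem_erase hx ((hmem y hy).2 x (Finset.mem_of_mem_erase hx) hxy.symm)
      · exact aux_tri Ω h3 a x y (hTa x (Finset.mem_of_mem_erase hx))
          (hTa y (Finset.mem_of_mem_erase hy)) hxy)
    rw [Finset.card_union_of_disjoint hd, Finset.card_erase_of_mem ht] at h
    omega
  have hup : ∑ t ∈ T, ((B.filter (fun b => Ω.Adj b t)).card +
      (B.filter (fun b => T.filter (fun s => Ω.Adj b s) = {t})).card) ≤ T.card * (18 - T.card) := by
    rw [← smul_eq_mul]
    apply Finset.sum_le_card_nsmul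
    intro t ht
    have h1 := hP t ht
    have h2 := aux_nb Ω h3 h10 B a t (hnB a ha) (hTa t ht)
    omega
  have hlow : B.card * 2 ≤ ∑ t ∈ T, ((B.filter (fun b => Ω.Adj b t)).card +
      (B.filter (fun b => T.filter (fun s => Ω.Adj b s) = {t})).card) := by
    simp only [Finset.card_filter _ B, ← Finset.sum_add_distrib]
    rw [Finset.sum_comm, ← smul_eq_mul]
    apply Finset.card_nsmul_le_sum
    intro b hb
    rw [Finset.sum_add_distrib, ← Finset.card_filter, ← Finset.card_filter]
    obtain ⟨t, ht, hbt⟩ := hcT b hb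
    have h1 : 0 < (T.filter (fun s => Ω.Adj b s)).card :=
      Finset.card_pos.2 ⟨t, Finset.mem_filter.2 ⟨ht, hbt⟩⟩
    by_cases h2 : (T.filter (fun s => Ω.Adj b s)).card = 1
    · obtain ⟨u, hu⟩ := Finset.card_eq_one.1 h2
      have hu' : u ∈ T := (Finset.mem_filter.1 (show u ∈ T.filter (fun s => Ω.Adj b s) by rw [hu]; simp)).1
      have h4 : 0 < (T.filter (fun t => T.filter (fun s => Ω.Adj b s) = {t})).card :=
        Finset.card_pos.2 ⟨u, Finset.mem_filter.2 ⟨hu', hu⟩⟩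
      omega
    · omega
  have hfin := hlow.trans hup
  generalize T.card = n at hfin hT5
  interval_cases n <;> omega

/-- A (3,10,40)-graph of diameter 2 has vertex connectivity at least 6:
deleting any set of at most 5 vertices leaves a connected graph. -/
theorem stmt_17 (Ω : SimpleGraph (Fin 40)) [DecidableRel Ω.Adj]
    (h3 : Ω.CliqueFree 3) (h10 : Ωᶜ.CliqueFree 10)
    (hdiam : Ω.diam = 2) :
    ∀ S : Finset (Fin 40), S.card ≤ 5 →
      (Ω.induce ((↑S : Set (Fin 40))ᶜ)).Connected := by
  classical
  intro S hS
  have htop : Ω.ediam ≠ ⊤ := by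
    apply SimpleGraph.ediam_ne_top_of_diam_ne_zero
    omega
  have hconn : Ω.Connected := SimpleGraph.connected_of_ediam_ne_top htop
  have hcommon : ∀ x y, x ≠ y → ¬ Ω.Adj x y → ∃ z, Ω.Adj x z ∧ Ω.Adj y z := by
    intro x y hne hna
    obtain ⟨w, hw⟩ := hconn.exists_walk_length_eq_dist x y
    have hd : Ω.dist x y ≤ 2 := hdiam ▸ SimpleGraph.dist_le_diam htop
    rw [← hw] at hd
    match w, hd with
    | .nil, _ => exact absurd rfl hne
    | .cons h .nil, _ => exact absurd h hna
    | .cons h (.cons h' .nil), _ => exact ⟨_, h, h'.symm⟩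
    | .cons h (.cons h' (.cons h'' p)), hd => simp at hd
  have hScard : Sᶜ.card + S.card = 40 := by
    simp
  rw [SimpleGraph.connected_iff]
  constructor
  · by_contra hpre
    simp only [SimpleGraph.Preconnected, not_forall] at hpre
    obtain ⟨x, y, hxy⟩ := hpre
    let R : Fin 40 → Prop := fun v => ∃ h : v ∈ ((↑S : Set (Fin 40))ᶜ),
      (Ω.induce ((↑S : Set (Fin 40))ᶜ)).Reachable x ⟨v, h⟩
    have hstep : ∀ u v, u ∉ S → v ∉ S → Ω.Adj u v → R u → R v := by
      rintro u v hu hv huv ⟨h, hr⟩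
      have hv' : v ∈ ((↑S : Set (Fin 40))ᶜ) := by simpa using hv
      refine ⟨hv', hr.trans (SimpleGraph.Adj.reachable ?_)⟩
      simpa using huv
    have hxS : x.1 ∉ S := fun h => x.2 (Finset.mem_coe.2 h)
    have hyS : y.1 ∉ S := fun h => y.2 (Finset.mem_coe.2 h)
    set A := Sᶜ.filter R with hA
    set B := Sᶜ.filter (fun v => ¬ R v) with hB
    have hAm : ∀ v, v ∈ A ↔ v ∉ S ∧ R v := by intro v; simp [hA]
    have hBm : ∀ v, v ∈ B ↔ v ∉ S ∧ ¬ R v := by intro v; simp [hB]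
    have hcard : A.card + B.card = Sᶜ.card := Finset.card_filter_add_card_filter_not _
    have hAne : A.Nonempty := ⟨x, (hAm _).2 ⟨hxS, x.2, SimpleGraph.Reachable.refl _⟩⟩
    have hBne : B.Nonempty := ⟨y, (hBm _).2 ⟨hyS, fun ⟨_, h⟩ => hxy h⟩⟩
    have hdis : Disjoint A B := Finset.disjoint_left.2 fun v h h' =>
      ((hBm v).1 h').2 ((hAm v).1 h).2
    have hno : ∀ a ∈ A, ∀ b ∈ B, ¬ Ω.Adj a b := by
      intro a ha b hb hab
      rw [hAm] at ha
      rw [hBm] at hb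
      exact hb.2 (hstep a b ha.1 hb.1 hab ha.2)
    have hcom : ∀ a ∈ A, ∀ b ∈ B, ∃ s ∈ S, Ω.Adj a s ∧ Ω.Adj b s := by
      intro a ha b hb
      obtain ⟨z, hz1, hz2⟩ := hcommon a b
        (fun h => Finset.disjoint_left.1 hdis ha (h ▸ hb)) (hno a ha b hb)
      refine ⟨z, ?_, hz1, hz2⟩
      by_contra hz
      by_cases hr : R z
      · exact hno z ((hAm z).2 ⟨hz, hr⟩) b hb hz2.symm
      · exact hno a ha z ((hBm z).2 ⟨hz, hr⟩) hz1
    rcases le_total A.card B.card with hle | hle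
    · exact aux_main Ω h3 h10 S A B hS (by omega) hAne hle hdis hno hcom
    · refine aux_main Ω h3 h10 S B A hS (by omega) hBne hle hdis.symm
        (fun b hb a ha h => hno a ha b hb h.symm) (fun b hb a ha => ?_)
      obtain ⟨s, hs, h1, h2⟩ := hcom a ha b hb
      exact ⟨s, hs, h2, h1⟩
  · have : 0 < Sᶜ.card := by omega
    obtain ⟨v, hv⟩ := Finset.card_pos.1 this
    exact ⟨⟨v, by simpa using hv⟩⟩
end

section
/- Let Ω be a (3,10,40)-graph with diam(Ω) = 2 and let S be a vertex cut of Ω of minimum cardinality (i.e., S is a vertex cut and no vertex cut of Ω has fewer vertices than S). Then S = N(v) for some vertex v of Ω. -/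
/-- A vertex cut of a graph on `Fin n`: a set of vertices whose deletion leaves a
disconnected graph. -/
def IsVertexCut {n : ℕ} (G : SimpleGraph (Fin n)) (S : Finset (Fin n)) : Prop :=
  ¬ (G.induce ((↑S : Set (Fin n))ᶜ)).Connected

theorem aux_cut {n : ℕ} (G : SimpleGraph (Fin n)) (S A : Finset (Fin n)) (a b : Fin n)
    (ha : a ∈ A) (haS : a ∉ S) (hb : b ∉ A) (hbS : b ∉ S)
    (hcl : ∀ x y, x ∈ A → y ∉ S → G.Adj x y → y ∈ A) : IsVertexCut G S := by
  intro hc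
  obtain ⟨w⟩ := hc.preconnected ⟨a, by simpa using haS⟩ ⟨b, by simpa using hbS⟩
  have key : ∀ (x y : ((↑S : Set (Fin n))ᶜ : Set (Fin n))),
      (G.induce ((↑S : Set (Fin n))ᶜ)).Walk x y → x.1 ∈ A → y.1 ∈ A := by
    intro x y w
    induction w with
    | nil => exact id
    | cons h p ih =>
      intro hx
      rename_i u v w
      exact ih (hcl _ _ hx (fun hh => v.2 (Finset.mem_coe.2 hh)) h)
  exact hb (key _ _ w ha)

theorem aux_split {n : ℕ} (G : SimpleGraph (Fin n)) (S : Finset (Fin n))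
    (u : Fin n) (hu : u ∉ S) (hcut : IsVertexCut G S) :
    ∃ A B : Finset (Fin n), A.Nonempty ∧ B.Nonempty ∧
      (∀ x, x ∉ S ↔ x ∈ A ∨ x ∈ B) ∧ (∀ x ∈ A, x ∉ B) ∧
      (∀ x ∈ A, ∀ y ∈ B, ¬ G.Adj x y) := by
  classical
  unfold IsVertexCut at hcut
  set H := G.induce ((↑S : Set (Fin n))ᶜ) with hH
  have hp : ¬ H.Preconnected := by
    intro hp
    have : Nonempty ((↑S : Set (Fin n))ᶜ : Set (Fin n)) := ⟨⟨u, by simpa using hu⟩⟩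
    exact hcut ⟨hp⟩
  unfold SimpleGraph.Preconnected at hp
  push Not at hp
  obtain ⟨p, q, hpq⟩ := hp
  refine ⟨Finset.univ.filter (fun x => ∃ h : x ∉ S, H.Reachable p ⟨x, by simpa using h⟩),
    Finset.univ.filter (fun x => ∃ h : x ∉ S, ¬ H.Reachable p ⟨x, by simpa using h⟩),
    ⟨p.1, ?_⟩, ⟨q.1, ?_⟩, ?_, ?_, ?_⟩
  · simp only [Finset.mem_filter, Finset.mem_univ, true_and]
    exact ⟨fun h => p.2 (Finset.mem_coe.2 h), SimpleGraph.Reachable.refl _⟩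
  · simp only [Finset.mem_filter, Finset.mem_univ, true_and]
    exact ⟨fun h => q.2 (Finset.mem_coe.2 h), hpq⟩
  · intro x
    simp only [Finset.mem_filter, Finset.mem_univ, true_and]
    constructor
    · intro h
      by_cases hr : H.Reachable p ⟨x, by simpa using h⟩
      · exact Or.inl ⟨h, hr⟩
      · exact Or.inr ⟨h, hr⟩
    · rintro (⟨h, _⟩ | ⟨h, _⟩) <;> exact h
  · intro x
    simp only [Finset.mem_filter, Finset.mem_univ, true_and]
    rintro ⟨h, hr⟩ ⟨_, hr'⟩
    exact hr' hr
  · intro x hx y hy hxy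
    simp only [Finset.mem_filter, Finset.mem_univ, true_and] at hx hy
    obtain ⟨h, hr⟩ := hx
    obtain ⟨h', hr'⟩ := hy
    refine hr' (hr.trans (SimpleGraph.Adj.reachable ?_))
    exact hxy

section
variable (Ω : SimpleGraph (Fin 40)) [DecidableRel Ω.Adj]

theorem aux_two (hT : ∀ a b c, Ω.Adj a b → Ω.Adj a c → ¬ Ω.Adj b c)
    (S A B : Finset (Fin 40)) (hB : B.Nonempty)
    (hcov : ∀ x, x ∉ S ↔ x ∈ A ∨ x ∈ B) (hdis : ∀ x ∈ A, x ∉ B)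
    (hno : ∀ x ∈ A, ∀ y ∈ B, ¬ Ω.Adj x y)
    (hd2 : ∀ x y, x ≠ y → ¬ Ω.Adj x y → ∃ z, Ω.Adj x z ∧ Ω.Adj y z)
    (hBn : ∀ b ∈ B, ∃ b' ∈ B, Ω.Adj b b') (a : Fin 40) (ha : a ∈ A) :
    2 ≤ (Ω.neighborFinset a ∩ S).card := by
  have key : ∀ b ∈ B, ∃ z ∈ Ω.neighborFinset a ∩ S, Ω.Adj b z := by
    intro b hb
    obtain ⟨z, h1, h2⟩ := hd2 a b (fun h => hdis a ha (h ▸ hb)) (hno a ha b hb)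
    refine ⟨z, ?_, h2⟩
    simp only [Finset.mem_inter, SimpleGraph.mem_neighborFinset]
    refine ⟨h1, ?_⟩
    by_contra hz
    rcases (hcov z).1 hz with h | h
    · exact hno z h b hb h2.symm
    · exact hno a ha z h h1
  obtain ⟨b, hb⟩ := hB
  obtain ⟨b', hb', hbb⟩ := hBn b hb
  obtain ⟨z, hz, h1⟩ := key b hb
  obtain ⟨z', hz', h2⟩ := key b' hb'
  have : z ≠ z' := by
    rintro rfl
    exact hT z b b' h1.symm h2.symm hbb
  exact Finset.one_lt_card.2 ⟨z, hz, z', hz', this⟩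

theorem aux_deg (S A B : Finset (Fin 40))
    (hcov : ∀ x, x ∉ S ↔ x ∈ A ∨ x ∈ B)
    (hno : ∀ x ∈ A, ∀ y ∈ B, ¬ Ω.Adj x y) (a : Fin 40) (ha : a ∈ A) :
    (Ω.neighborFinset a).card ≤
      (Ω.neighborFinset a ∩ A).card + (Ω.neighborFinset a ∩ S).card := by
  refine le_trans (Finset.card_le_card ?_) (Finset.card_union_le _ _)
  intro z hz
  have hz' := (Ω.mem_neighborFinset a z).1 hz
  simp only [Finset.mem_union, Finset.mem_inter]
  by_cases h : z ∈ S
  · exact Or.inr ⟨hz, h⟩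
  · rcases (hcov z).1 h with h | h
    · exact Or.inl ⟨hz, h⟩
    · exact absurd hz' (hno a ha z h)

theorem aux_indep_s19 (hT : ∀ a b c, Ω.Adj a b → Ω.Adj a c → ¬ Ω.Adj b c)
    (S A B : Finset (Fin 40)) (hA : A.Nonempty)
    (hcov : ∀ x, x ∉ S ↔ x ∈ A ∨ x ∈ B)
    (hno : ∀ x ∈ A, ∀ y ∈ B, ¬ Ω.Adj x y)
    (hS : 8 ≤ S.card) (hdeg : ∀ v, S.card ≤ (Ω.neighborFinset v).card)
    (hAn : ∀ b ∈ A, ∃ b' ∈ A, Ω.Adj b b') :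
    ∃ I ⊆ A, (∀ x ∈ I, ∀ y ∈ I, ¬ Ω.Adj x y) ∧ 4 ≤ I.card := by
  obtain ⟨a, ha⟩ := hA
  obtain ⟨b, hb, hab⟩ := hAn a ha
  have h1 := aux_deg Ω S A B hcov hno a ha
  have h2 := aux_deg Ω S A B hcov hno b hb
  have h3 : (Ω.neighborFinset a ∩ S).card + (Ω.neighborFinset b ∩ S).card ≤ S.card := by
    rw [← Finset.card_union_of_disjoint]
    · exact Finset.card_le_card (Finset.union_subset Finset.inter_subset_right
        Finset.inter_subset_right)
    · rw [Finset.disjoint_left]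
      intro z hz hz'
      simp only [Finset.mem_inter, SimpleGraph.mem_neighborFinset] at hz hz'
      exact hT a b z hab hz.1 hz'.1
  have hi : ∀ v, ∀ x ∈ Ω.neighborFinset v ∩ A, ∀ y ∈ Ω.neighborFinset v ∩ A, ¬ Ω.Adj x y := by
    intro v x hx y hy
    simp only [Finset.mem_inter, SimpleGraph.mem_neighborFinset] at hx hy
    exact hT v x y hx.1 hy.1
  have h4 := hdeg a
  have h5 := hdeg b
  by_cases h : 4 ≤ (Ω.neighborFinset a ∩ A).card
  · exact ⟨_, Finset.inter_subset_right, hi a, h⟩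
  · exact ⟨_, Finset.inter_subset_right, hi b, by omega⟩

theorem aux_three (hT : ∀ a b c, Ω.Adj a b → Ω.Adj a c → ¬ Ω.Adj b c)
    (hI : ∀ I : Finset (Fin 40), (∀ x ∈ I, ∀ y ∈ I, ¬ Ω.Adj x y) → I.card ≤ 9)
    (S A B : Finset (Fin 40)) (hB : B.Nonempty)
    (hcov : ∀ x, x ∉ S ↔ x ∈ A ∨ x ∈ B) (hdis : ∀ x ∈ A, x ∉ B)
    (hno : ∀ x ∈ A, ∀ y ∈ B, ¬ Ω.Adj x y)
    (hS : 8 ≤ S.card) (hdeg : ∀ v, S.card ≤ (Ω.neighborFinset v).card)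
    (hBn : ∀ b ∈ B, ∃ b' ∈ B, Ω.Adj b b') (a : Fin 40) (ha : a ∈ A) :
    3 ≤ (Ω.neighborFinset a ∩ S).card := by
  obtain ⟨I, hIB, hII, hI4⟩ := aux_indep_s19 Ω hT S B A hB (fun x => (hcov x).trans or_comm)
    (fun x hx y hy h => hno y hy x hx h.symm) hS hdeg hBn
  have h1 := aux_deg Ω S A B hcov hno a ha
  have h2 := hdeg a
  have h3 : ((Ω.neighborFinset a ∩ A) ∪ I).card ≤ 9 := by
    apply hI
    intro x hx y hy hxy
    simp only [Finset.mem_union, Finset.mem_inter, SimpleGraph.mem_neighborFinset] at hx hy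
    rcases hx with hx | hx <;> rcases hy with hy | hy
    · exact hT a x y hx.1 hy.1 hxy
    · exact hno x hx.2 y (hIB hy) hxy
    · exact hno y hy.2 x (hIB hx) hxy.symm
    · exact hII x hx y hy hxy
  rw [Finset.card_union_of_disjoint] at h3
  · omega
  · rw [Finset.disjoint_left]
    intro z hz hz'
    exact hdis z (Finset.mem_inter.1 hz).2 (hIB hz')

theorem aux_count (hmax : ∀ v, (Ω.neighborFinset v).card ≤ 9) (S : Finset (Fin 40)) (k : ℕ)
    (hk : ∀ v, v ∉ S → k ≤ (Ω.neighborFinset v ∩ S).card) :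
    (40 - S.card) * k ≤ S.card * 9 := by
  have h := Finset.card_nsmul_le_sum Sᶜ (fun v => (Finset.bipartiteAbove Ω.Adj S v).card) k (by
    intro v hv
    refine (hk v (Finset.mem_compl.1 hv)).trans (Finset.card_le_card ?_)
    intro z hz
    simp only [Finset.mem_inter, SimpleGraph.mem_neighborFinset] at hz
    simp [Finset.bipartiteAbove, hz])
  rw [Finset.sum_card_bipartiteAbove_eq_sum_card_bipartiteBelow] at h
  have h' := Finset.sum_le_card_nsmul S (fun v => (Finset.bipartiteBelow Ω.Adj Sᶜ v).card) 9 (by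
    intro v hv
    refine le_trans (Finset.card_le_card ?_) (hmax v)
    intro z hz
    simp only [Finset.bipartiteBelow, Finset.mem_filter] at hz
    simpa using hz.2.symm)
  have := h.trans h'
  simpa [Finset.card_compl] using this

end

/-- In a (3,10,40)-graph of diameter 2, every vertex cut of minimum
cardinality is the neighbourhood N(v) of some vertex v. -/
theorem stmt_19 (Ω : SimpleGraph (Fin 40)) [DecidableRel Ω.Adj]
    (h3 : Ω.CliqueFree 3) (h10 : Ωᶜ.CliqueFree 10)
    (hdiam : Ω.diam = 2) (S : Finset (Fin 40))
    (hcut : IsVertexCut Ω S)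
    (hmin : ∀ T : Finset (Fin 40), IsVertexCut Ω T → S.card ≤ T.card) :
    ∃ v : Fin 40, S = Ω.neighborFinset v := by
  have hT : ∀ a b c, Ω.Adj a b → Ω.Adj a c → ¬ Ω.Adj b c := by
    intro a b c hab hac hbc
    exact h3 {a, b, c} (SimpleGraph.is3Clique_triple_iff.2 ⟨hab, hac, hbc⟩)
  have hI : ∀ I : Finset (Fin 40), (∀ x ∈ I, ∀ y ∈ I, ¬ Ω.Adj x y) → I.card ≤ 9 := by
    intro I hI
    by_contra hc
    obtain ⟨J, hJ, hJc⟩ := Finset.exists_subset_card_eq (show 10 ≤ I.card by omega)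
    refine h10 J ⟨?_, hJc⟩
    intro x hx y hy hxy
    exact (SimpleGraph.compl_adj _ _ _).2 ⟨hxy, hI x (hJ hx) y (hJ hy)⟩
  have hmax : ∀ v, (Ω.neighborFinset v).card ≤ 9 := by
    intro v
    apply hI
    intro x hx y hy
    exact hT v x y (by simpa using hx) (by simpa using hy)
  have hd2 : ∀ x y, x ≠ y → ¬ Ω.Adj x y → ∃ z, Ω.Adj x z ∧ Ω.Adj y z := by
    intro x y hne hna
    have hne0 : Ω.diam ≠ 0 := by omega
    have hle : Ω.dist x y ≤ 2 := hdiam ▸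
      SimpleGraph.dist_le_diam (SimpleGraph.ediam_ne_top_of_diam_ne_zero hne0)
    have hconn : Ω.Connected := SimpleGraph.connected_iff_diam_ne_zero.2 hne0
    obtain ⟨w, hw⟩ := hconn.exists_walk_length_eq_dist x y
    rw [← hw] at hle
    match w, hle with
    | .nil, _ => exact absurd rfl hne
    | .cons h .nil, _ => exact absurd h hna
    | .cons h (.cons h' .nil), _ => exact ⟨_, h, h'.symm⟩
    | .cons h (.cons h' (.cons h'' p)), hle =>
      simp at hle
  have hN : ∀ v, IsVertexCut Ω (Ω.neighborFinset v) := by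
    intro v
    have hc : (insert v (Ω.neighborFinset v)).card < (Finset.univ : Finset (Fin 40)).card := by
      have := Finset.card_insert_le v (Ω.neighborFinset v)
      have := hmax v
      simp only [Finset.card_univ, Fintype.card_fin]
      omega
    obtain ⟨w, _, hw⟩ := Finset.exists_mem_notMem_of_card_lt_card hc
    simp only [Finset.mem_insert, not_or] at hw
    refine aux_cut Ω _ {v} v w (by simp) (by simp) (by simpa using hw.1) hw.2 ?_
    intro x y hx hy hxy
    rw [Finset.mem_singleton] at hx
    subst hx
    exact absurd ((Ω.mem_neighborFinset x y).2 hxy) hy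
  have hdeg : ∀ v, S.card ≤ (Ω.neighborFinset v).card := fun v => hmin _ (hN v)
  have hS9 : S.card ≤ 9 := (hdeg 0).trans (hmax 0)
  by_contra hno'
  push Not at hno'
  have hcS : S.card < (Finset.univ : Finset (Fin 40)).card := by
    simp only [Finset.card_univ, Fintype.card_fin]
    omega
  obtain ⟨u, _, hu⟩ := Finset.exists_mem_notMem_of_card_lt_card hcS
  obtain ⟨A, B, hA, hB, hcov, hdis, hno⟩ := aux_split Ω S u hu hcut
  have hcov' : ∀ x, x ∉ S ↔ x ∈ B ∨ x ∈ A := fun x => (hcov x).trans or_comm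
  have hdis2 : ∀ x ∈ B, x ∉ A := fun x hx hx' => hdis x hx' hx
  have hno2 : ∀ x ∈ B, ∀ y ∈ A, ¬ Ω.Adj x y := fun x hx y hy h => hno y hy x hx h.symm
  have hn : ∀ a, ∃ z, z ∉ S ∧ Ω.Adj a z := by
    intro a
    by_contra hc
    push Not at hc
    refine hno' a (Finset.eq_of_subset_of_card_le ?_ (hdeg a)).symm
    intro z hz
    by_contra hzS
    exact hc z hzS (by simpa using hz)
  have hAn : ∀ a ∈ A, ∃ a' ∈ A, Ω.Adj a a' := by
    intro a ha
    obtain ⟨z, hz, haz⟩ := hn a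
    rcases (hcov z).1 hz with h | h
    · exact ⟨z, h, haz⟩
    · exact absurd haz (hno a ha z h)
  have hBn : ∀ a ∈ B, ∃ a' ∈ B, Ω.Adj a a' := by
    intro a ha
    obtain ⟨z, hz, haz⟩ := hn a
    rcases (hcov z).1 hz with h | h
    · exact absurd haz (hno2 a ha z h)
    · exact ⟨z, h, haz⟩
  have c2 := aux_count Ω hmax S 2 (by
    intro v hv
    rcases (hcov v).1 hv with h | h
    · exact aux_two Ω hT S A B hB hcov hdis hno hd2 hBn v h
    · exact aux_two Ω hT S B A hA hcov' hdis2 hno2 hd2 hAn v h)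
  have hS8 : 8 ≤ S.card := by omega
  have c3 := aux_count Ω hmax S 3 (by
    intro v hv
    rcases (hcov v).1 hv with h | h
    · exact aux_three Ω hT hI S A B hB hcov hdis hno hS8 hdeg hBn v h
    · exact aux_three Ω hT hI S B A hA hcov' hdis2 hno2 hS8 hdeg hAn v h)
  omega
end
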